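/- arXiv:1311.1562 — 10 statements merged into one kernel-verified Lean document; each statement's English description precedes it below -/
import Mathlib

section
/- Let (S, Sigma, lambda) be a probability space, G a sub-sigma-algebra of Sigma such that Sigma has no G-atom, and G a Sigma-measurable, integrably bounded, closed-valued correspondence from S to R^m. Then I^{(Sigma,G)}_G = I^{(Sigma,G)}_{co(G)}; equivalently, for every Sigma-measurable selection f of the pointwise convex hull co(G) there exists a Sigma-measurable selection g of G with E(g | G) = E(f | G) lambda-almost everywhere, and conversely every Sigma-measurable selection of G is a selection of co(G). -/
open MeasureTheory

/-- `D` is a `G`-atom for the measure `lam`. -/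
def IsGAtom {S : Type*} (mS : MeasurableSpace S) (G : MeasurableSpace S)
    (lam : @Measure S mS) (D : Set S) : Prop :=
  0 < lam D ∧ ∀ D₀ ⊆ D, MeasurableSet[mS] D₀ →
    ∃ D₁ : Set S, MeasurableSet[G] D₁ ∧ lam (symmDiff D₀ (D₁ ∩ D)) = 0

/-- A set is a.e. contained in the set where its conditional probability is nonzero. -/
theorem condProb_support {S : Type*} (G : MeasurableSpace S) [mS : MeasurableSpace S]
    (lam : Measure S) [IsFiniteMeasure lam] (hG : G ≤ mS)
    {D B : Set S} (hD : MeasurableSet[mS] D) (hB : MeasurableSet[G] B) :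
    lam (B ∩ D) = 0 ↔ lam (B ∩ {s | lam[D.indicator (fun _ => (1 : ℝ))|G] s ≠ 0}) = 0 := by
  have hIntg : Integrable (D.indicator (fun _ => (1 : ℝ))) lam :=
    (integrable_const 1).indicator hD
  have h1 := setIntegral_condExp hG hIntg hB
  have h2 : ∫ s in B, D.indicator (fun _ => (1 : ℝ)) s ∂lam = lam.real (B ∩ D) := by
    rw [setIntegral_indicator hD]; simp
  have hnn : 0 ≤ᵐ[lam] lam[D.indicator (fun _ => (1 : ℝ))|G] :=
    condExp_nonneg (Filter.Eventually.of_forall fun s => Set.indicator_nonneg (by simp) s)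
  rw [← measureReal_eq_zero_iff, ← h2, ← h1,
    setIntegral_eq_zero_iff_of_nonneg_ae (ae_restrict_of_ae hnn) integrable_condExp.integrableOn]
  rw [Filter.EventuallyEq, ae_restrict_iff' (hG _ hB), ae_iff]
  congr! 2
  ext s
  simp

theorem split_lemma {S : Type*} (G : MeasurableSpace S) [mS : MeasurableSpace S]
    (lam : Measure S) [IsFiniteMeasure lam] (hG : G ≤ mS)
    (h_no_atom : ∀ D : Set S, MeasurableSet[mS] D → ¬ IsGAtom mS G lam D)
    {D : Set S} (hD : MeasurableSet[mS] D) (hpos : lam D ≠ 0) :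
    ∃ D' D'' B : Set S, MeasurableSet[mS] D' ∧ MeasurableSet[mS] D'' ∧ MeasurableSet[G] B ∧
      D' ⊆ D ∧ D'' ⊆ D ∧ Disjoint D' D'' ∧ lam B ≠ 0 ∧
      ∀ B₁ ⊆ B, MeasurableSet[G] B₁ → lam B₁ ≠ 0 → lam (D' ∩ B₁) ≠ 0 ∧ lam (D'' ∩ B₁) ≠ 0 := by
  have h := h_no_atom D hD
  simp only [IsGAtom, not_and, not_forall] at h
  obtain ⟨D', hD'D, hD', hno⟩ := h (pos_iff_ne_zero.2 hpos)
  set p := lam[D'.indicator (fun _ => (1 : ℝ))|G] with hp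
  set q := lam[(D \ D').indicator (fun _ => (1 : ℝ))|G] with hq
  have hpm : MeasurableSet[G] {s | p s ≠ 0} :=
    (stronglyMeasurable_condExp.measurable (measurableSet_singleton (0 : ℝ))).compl
  have hqm : MeasurableSet[G] {s | q s ≠ 0} :=
    (stronglyMeasurable_condExp.measurable (measurableSet_singleton (0 : ℝ))).compl
  have hD'' := hD.diff hD'
  refine ⟨D', D \ D', {s | p s ≠ 0} ∩ {s | q s ≠ 0}, hD', hD'', hpm.inter hqm,
    hD'D, Set.sdiff_subset, Set.disjoint_sdiff_right, ?_, ?_⟩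
  · intro h0
    refine hno ⟨{s | p s ≠ 0}, hpm, ?_⟩
    rw [Set.symmDiff_def]
    refine measure_union_null ?_ ?_
    · refine measure_mono_null (t := {s | p s ≠ 0}ᶜ ∩ D') ?_ ?_
      · rintro s ⟨h1, h2⟩
        exact ⟨fun h3 => h2 ⟨h3, hD'D h1⟩, h1⟩
      · rw [condProb_support G lam hG hD' hpm.compl, ← hp, Set.compl_inter_self]
        simp
    · refine measure_mono_null (t := {s | p s ≠ 0} ∩ (D \ D')) ?_ ?_
      · rintro s ⟨h1, h2⟩
        exact ⟨h1.1, h1.2, h2⟩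
      · rwa [condProb_support G lam hG hD'' hpm]
  · intro B₁ hB₁ hB₁m hB₁0
    constructor
    · rw [Set.inter_comm, Ne, condProb_support G lam hG hD' hB₁m, ← hp,
        Set.inter_eq_left.2 fun s hs => (hB₁ hs).1]
      exact hB₁0
    · rw [Set.inter_comm, Ne, condProb_support G lam hG hD'' hB₁m, ← hq,
        Set.inter_eq_left.2 fun s hs => (hB₁ hs).2]
      exact hB₁0

theorem key_lemma {S : Type*} (G : MeasurableSpace S) [mS : MeasurableSpace S]
    (lam : Measure S) [IsFiniteMeasure lam] (hG : G ≤ mS)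
    (h_no_atom : ∀ D : Set S, MeasurableSet[mS] D → ¬ IsGAtom mS G lam D)
    (v : ℕ → S → ℝ) (hv : ∀ n, Integrable (v n) lam) (k : ℕ) :
    ∀ D : Set S, MeasurableSet[mS] D → lam D ≠ 0 →
      ∃ φ : S → ℝ, Measurable[mS] φ ∧ (∀ s, |φ s| ≤ 1) ∧ (∀ s, s ∉ D → φ s = 0) ∧
        ¬ (φ =ᵐ[lam] 0) ∧ ∀ n < k, lam[φ * v n|G] =ᵐ[lam] 0 := by
  have hIntg : ∀ (φ : S → ℝ) (n : ℕ), Measurable[mS] φ → (∀ s, |φ s| ≤ 1) →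
      Integrable (φ * v n) lam := fun φ n hφ hb =>
    (hv n).bdd_mul hφ.aestronglyMeasurable (Filter.Eventually.of_forall hb)
  -- localization of the conditional expectation
  have hloc : ∀ (φ : S → ℝ) (n : ℕ) (B : Set S), Measurable[mS] φ → (∀ s, |φ s| ≤ 1) →
      MeasurableSet[G] B → (∀ s, s ∉ B → φ s = 0) →
      ∀ᵐ s ∂lam, s ∉ B → lam[φ * v n|G] s = 0 := by
    intro φ n B hφ hb hB h0
    have := condExp_indicator (hIntg φ n hφ hb) hB
    have e : B.indicator (φ * v n) = φ * v n := by
      rw [Set.indicator_eq_self]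
      intro s hs
      by_contra hsB
      exact hs (by simp [h0 s hsB])
    rw [e] at this
    filter_upwards [this] with s hs hsB
    rw [hs, Set.indicator_of_notMem hsB]
  induction k with
  | zero =>
    intro D hD hpos
    refine ⟨D.indicator (fun _ => 1), measurable_const.indicator hD, fun s => ?_,
      fun s hs => by simp [hs], ?_, by simp⟩
    · by_cases hs : s ∈ D <;> simp [hs]
    · intro h
      apply hpos
      rw [Filter.EventuallyEq, ae_iff] at h
      convert h using 2
      ext s; simp
  | succ k ih =>
    intro D hD hpos
    obtain ⟨D', D'', B, hD', hD'', hB, hD'D, hD''D, hdisj, hB0, hsub⟩ :=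
      split_lemma G lam hG h_no_atom hD hpos
    obtain ⟨φ', hφ'm, hφ'b, hφ's, hφ'0, hφ'k⟩ :=
      ih (D' ∩ B) (hD'.inter (hG _ hB)) (hsub B subset_rfl hB hB0).1
    by_cases hx0 : lam[φ' * v k|G] =ᵐ[lam] 0
    · refine ⟨φ', hφ'm, hφ'b, fun s hs => hφ's s fun h => hs (hD'D h.1), hφ'0, ?_⟩
      intro n hn
      rcases Nat.lt_succ_iff_lt_or_eq.1 hn with h | rfl
      · exact hφ'k n h
      · exact hx0
    set x := lam[φ' * v k|G] with hx
    have hxm : StronglyMeasurable[G] x := stronglyMeasurable_condExp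
    have hxs : MeasurableSet[G] {s | x s ≠ 0} :=
      (hxm.measurable (measurableSet_singleton (0 : ℝ))).compl
    set B₁ := B ∩ {s | x s ≠ 0} with hB₁
    have hB₁m : MeasurableSet[G] B₁ := hB.inter hxs
    have hB₁0 : lam B₁ ≠ 0 := by
      intro h
      apply hx0
      have h1 := hloc φ' k B hφ'm hφ'b hB fun s hs => hφ's s fun h => hs h.2
      have h2 : ∀ᵐ s ∂lam, s ∉ B₁ := measure_eq_zero_iff_ae_notMem.1 h
      filter_upwards [h1, h2] with s hs1 hs2
      by_cases hsB : s ∈ B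
      · by_contra h3
        exact hs2 ⟨hsB, h3⟩
      · exact hs1 hsB
    obtain ⟨φ'', hφ''m, hφ''b, hφ''s, hφ''0, hφ''k⟩ :=
      ih (D'' ∩ B₁) (hD''.inter (hG _ hB₁m)) (hsub B₁ Set.inter_subset_left hB₁m hB₁0).2
    by_cases hy0 : lam[φ'' * v k|G] =ᵐ[lam] 0
    · refine ⟨φ'', hφ''m, hφ''b, fun s hs => hφ''s s fun h => hs (hD''D h.1), hφ''0, ?_⟩
      intro n hn
      rcases Nat.lt_succ_iff_lt_or_eq.1 hn with h | rfl
      · exact hφ''k n h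
      · exact hy0
    set y := lam[φ'' * v k|G] with hy
    have hym : StronglyMeasurable[G] y := stronglyMeasurable_condExp
    let α : S → ℝ := fun s => y s / (1 + |x s| + |y s|)
    let β : S → ℝ := fun s => x s / (1 + |x s| + |y s|)
    have hden : ∀ s, 0 < 1 + |x s| + |y s| := fun s => by positivity
    have hdenm : Measurable[G] (fun s => 1 + |x s| + |y s|) :=
      (measurable_const.add hxm.norm.measurable).add hym.norm.measurable
    have hαm : StronglyMeasurable[G] α := (hym.measurable.div hdenm).stronglyMeasurable
    have hβm : StronglyMeasurable[G] β := (hxm.measurable.div hdenm).stronglyMeasurable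
    have hαb : ∀ s, |α s| ≤ 1 := fun s => by
      simp only [α, abs_div, abs_of_pos (hden s)]
      rw [div_le_one (hden s)]
      linarith [abs_nonneg (x s)]
    have hβb : ∀ s, |β s| ≤ 1 := fun s => by
      simp only [β, abs_div, abs_of_pos (hden s)]
      rw [div_le_one (hden s)]
      linarith [abs_nonneg (y s)]
    have pull : ∀ (γ ψ : S → ℝ) (n : ℕ), StronglyMeasurable[G] γ → (∀ s, |γ s| ≤ 1) →
        Measurable[mS] ψ → (∀ s, |ψ s| ≤ 1) →
        lam[γ * (ψ * v n)|G] =ᵐ[lam] γ * lam[ψ * v n|G] := fun γ ψ n hγ hγb hψ hψb =>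
      condExp_stronglyMeasurable_mul_of_bound hG hγ (hIntg ψ n hψ hψb) 1
        (Filter.Eventually.of_forall hγb)
    have iprod : ∀ (γ ψ : S → ℝ) (n : ℕ), StronglyMeasurable[G] γ → (∀ s, |γ s| ≤ 1) →
        Measurable[mS] ψ → (∀ s, |ψ s| ≤ 1) → Integrable (γ * (ψ * v n)) lam :=
      fun γ ψ n hγ hγb hψ hψb => (hIntg ψ n hψ hψb).bdd_mul
        (hγ.mono hG).aestronglyMeasurable (Filter.Eventually.of_forall hγb)
    have hcond : ∀ n, lam[(α * φ' - β * φ'') * v n|G] =ᵐ[lam]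
        α * lam[φ' * v n|G] - β * lam[φ'' * v n|G] := by
      intro n
      have e : (α * φ' - β * φ'') * v n = α * (φ' * v n) - β * (φ'' * v n) := by ring
      rw [e]
      exact (condExp_sub (iprod α φ' n hαm hαb hφ'm hφ'b) (iprod β φ'' n hβm hβb hφ''m hφ''b) G).trans
        ((pull α φ' n hαm hαb hφ'm hφ'b).sub (pull β φ'' n hβm hβb hφ''m hφ''b))
    have hor : ∀ s, φ' s = 0 ∨ φ'' s = 0 := by
      intro s
      by_cases hs : s ∈ D'
      · right; exact hφ''s s fun h => Set.disjoint_left.1 hdisj hs h.1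
      · left; exact hφ's s fun h => hs h.1
    refine ⟨α * φ' - β * φ'', ?_, ?_, ?_, ?_, ?_⟩
    · exact ((hαm.mono hG).measurable.mul hφ'm).sub ((hβm.mono hG).measurable.mul hφ''m)
    · intro s
      rcases hor s with h | h
      · simp only [Pi.sub_apply, Pi.mul_apply, h, mul_zero, zero_sub, abs_neg, abs_mul]
        exact mul_le_one₀ (hβb s) (abs_nonneg _) (hφ''b s)
      · simp only [Pi.sub_apply, Pi.mul_apply, h, mul_zero, sub_zero, abs_mul]
        exact mul_le_one₀ (hαb s) (abs_nonneg _) (hφ'b s)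
    · intro s hs
      simp [hφ's s fun h => hs (hD'D h.1), hφ''s s fun h => hs (hD''D h.1)]
    · intro hz
      have h1 : α * (φ' * v k) =ᵐ[lam] 0 := by
        filter_upwards [hz] with s hs
        rcases hor s with h | h
        · simp [h]
        · simp only [Pi.sub_apply, Pi.mul_apply, h, mul_zero, sub_zero, Pi.zero_apply] at hs
          simp only [Pi.mul_apply, ← mul_assoc, hs, zero_mul, Pi.zero_apply]
      have h2 : α * x =ᵐ[lam] 0 :=
        (pull α φ' k hαm hαb hφ'm hφ'b).symm.trans
          ((condExp_congr_ae h1).trans (by rw [condExp_zero]))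
      apply hy0
      have h3 := hloc φ'' k B₁ hφ''m hφ''b hB₁m fun s hs => hφ''s s fun h => hs h.2
      filter_upwards [h2, h3] with s hs2 hs3
      by_cases hsB : s ∈ B₁
      · have hxn : x s ≠ 0 := hsB.2
        simp only [Pi.mul_apply, Pi.zero_apply, mul_eq_zero, hxn, or_false, α, div_eq_zero_iff,
          (hden s).ne'] at hs2
        exact hs2
      · exact hs3 hsB
    · intro n hn
      refine (hcond n).trans ?_
      rcases Nat.lt_succ_iff_lt_or_eq.1 hn with h | rfl
      · filter_upwards [hφ'k n h, hφ''k n h] with s h1 h2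
        simp [h1, h2]
      · refine Filter.Eventually.of_forall fun s => ?_
        simp only [Pi.sub_apply, Pi.mul_apply, ← hx, ← hy, α, β, Pi.zero_apply]
        ring

/-- Compact-valued nonempty correspondence with measurable hitting sets of closed sets. -/
structure CompactCorr {S E : Type*} [MeasurableSpace S] [TopologicalSpace E]
    (X : S → Set E) : Prop where
  compact : ∀ s, IsCompact (X s)
  nonempty : ∀ s, (X s).Nonempty
  meas : ∀ C : Set E, IsClosed C → MeasurableSet {s | (X s ∩ C).Nonempty}

theorem CompactCorr.of_open {S E : Type*} [MeasurableSpace S] [MetricSpace E]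
    {X : S → Set E} (h1 : ∀ s, IsCompact (X s)) (h2 : ∀ s, (X s).Nonempty)
    (h3 : ∀ U : Set E, IsOpen U → MeasurableSet {s | (X s ∩ U).Nonempty}) :
    CompactCorr X := by
  refine ⟨h1, h2, fun C hC => ?_⟩
  have : {s | (X s ∩ C).Nonempty} =
      ⋂ n : ℕ, {s | (X s ∩ Metric.thickening (1 / ((n : ℝ) + 1)) C).Nonempty} := by
    ext s
    simp only [Set.mem_ofPred_eq, Set.mem_iInter]
    constructor
    · rintro ⟨x, hx, hxC⟩ n
      exact ⟨x, hx, Metric.self_subset_thickening (by positivity) _ hxC⟩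
    · intro h
      by_contra hne
      have hd : Disjoint (X s) C := by
        rw [Set.disjoint_iff_inter_eq_empty]
        exact Set.not_nonempty_iff_eq_empty.1 hne
      obtain ⟨δ, hδ, hd'⟩ := hd.exists_thickenings (h1 s) hC
      obtain ⟨n, hn⟩ := exists_nat_one_div_lt hδ
      obtain ⟨x, hx, hxC⟩ := h n
      exact Set.disjoint_left.1 hd' (Metric.self_subset_thickening hδ _ hx)
        (Metric.thickening_mono hn.le _ hxC)
  rw [this]
  exact MeasurableSet.iInter fun n => h3 _ Metric.isOpen_thickening

theorem CompactCorr.meas_open {S E : Type*} [MeasurableSpace S] [MetricSpace E]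
    {X : S → Set E} (h : CompactCorr X) {U : Set E} (hU : IsOpen U) :
    MeasurableSet {s | (X s ∩ U).Nonempty} := by
  obtain ⟨C, hC, -, hCU, -⟩ := hU.exists_iUnion_isClosed
  have : {s | (X s ∩ U).Nonempty} = ⋃ n, {s | (X s ∩ C n).Nonempty} := by
    ext s
    simp only [← hCU, Set.inter_iUnion, Set.nonempty_iUnion, Set.mem_ofPred_eq, Set.mem_iUnion]
  rw [this]
  exact MeasurableSet.iUnion fun n => h.meas _ (hC n)

theorem CompactCorr.prod {S E E' : Type*} [MeasurableSpace S] [MetricSpace E]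
    [MetricSpace E'] [SecondCountableTopology E] [SecondCountableTopology E']
    {X : S → Set E} {Y : S → Set E'}
    (hX : CompactCorr X) (hY : CompactCorr Y) : CompactCorr (fun s => X s ×ˢ Y s) := by
  refine CompactCorr.of_open (fun s => (hX.compact s).prod (hY.compact s))
    (fun s => (hX.nonempty s).prod (hY.nonempty s)) fun U hU => ?_
  have : {s | (X s ×ˢ Y s ∩ U).Nonempty} =
      ⋃ b : TopologicalSpace.countableBasis E, ⋃ c : TopologicalSpace.countableBasis E',
        {s | (b : Set E) ×ˢ (c : Set E') ⊆ U} ∩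
        ({s | (X s ∩ b).Nonempty} ∩ {s | (Y s ∩ c).Nonempty}) := by
    ext s
    simp only [Set.mem_ofPred_eq, Set.mem_iUnion, Set.mem_inter_iff]
    constructor
    · rintro ⟨⟨x, y⟩, ⟨hx, hy⟩, hxy⟩
      obtain ⟨u, hu, v, hv, huv⟩ := mem_nhds_prod_iff.1 (hU.mem_nhds hxy)
      obtain ⟨b, hb, hxb, hbu⟩ :=
        (TopologicalSpace.isBasis_countableBasis E).mem_nhds_iff.1 hu
      obtain ⟨c, hc, hyc, hcv⟩ :=
        (TopologicalSpace.isBasis_countableBasis E').mem_nhds_iff.1 hv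
      exact ⟨⟨b, hb⟩, ⟨c, hc⟩, (Set.prod_mono hbu hcv).trans huv, ⟨x, hx, hxb⟩, ⟨y, hy, hyc⟩⟩
    · rintro ⟨b, c, hbc, ⟨x, hx, hxb⟩, ⟨y, hy, hyc⟩⟩
      exact ⟨(x, y), ⟨hx, hy⟩, hbc ⟨hxb, hyc⟩⟩
  rw [this]
  have : Countable (TopologicalSpace.countableBasis E) :=
    (TopologicalSpace.countable_countableBasis E).to_subtype
  have : Countable (TopologicalSpace.countableBasis E') :=
    (TopologicalSpace.countable_countableBasis E').to_subtype
  refine MeasurableSet.iUnion fun b => MeasurableSet.iUnion fun c =>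
    (MeasurableSet.const _).inter ((hX.meas_open ?_).inter (hY.meas_open ?_))
  · exact TopologicalSpace.isOpen_of_mem_countableBasis b.2
  · exact TopologicalSpace.isOpen_of_mem_countableBasis c.2

theorem CompactCorr.pi {S E : Type*} [MeasurableSpace S] [MetricSpace E]
    [SecondCountableTopology E] {k : ℕ} {X : S → Set E}
    (hX : CompactCorr X) :
    CompactCorr (fun s => Set.univ.pi (fun _ : Fin k => X s)) := by
  refine CompactCorr.of_open (fun s => isCompact_univ_pi fun _ => hX.compact s)
    (fun s => Set.univ_pi_nonempty_iff.2 fun _ => hX.nonempty s) fun U hU => ?_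
  have : {s | (Set.univ.pi (fun _ : Fin k => X s) ∩ U).Nonempty} =
      ⋃ b : Fin k → TopologicalSpace.countableBasis E,
        {s | Set.univ.pi (fun i => (b i : Set E)) ⊆ U} ∩
        ⋂ i, {s | (X s ∩ b i).Nonempty} := by
    ext s
    simp only [Set.mem_ofPred_eq, Set.mem_iUnion, Set.mem_inter_iff, Set.mem_iInter]
    constructor
    · rintro ⟨x, hx, hxU⟩
      obtain ⟨u, hu, huU⟩ := isOpen_pi_iff'.1 hU x hxU
      have : ∀ i, ∃ b : TopologicalSpace.countableBasis E, x i ∈ (b : Set E) ∧ (b : Set E) ⊆ u i := by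
        intro i
        obtain ⟨b, hb, hxb, hbu⟩ :=
          (TopologicalSpace.isBasis_countableBasis E).mem_nhds_iff.1 ((hu i).1.mem_nhds (hu i).2)
        exact ⟨⟨b, hb⟩, hxb, hbu⟩
      choose b hb hbu using this
      exact ⟨b, (Set.pi_mono fun i _ => hbu i).trans huU, fun i => ⟨x i, hx i trivial, hb i⟩⟩
    · rintro ⟨b, hbU, hb⟩
      choose x hx hxb using hb
      exact ⟨x, fun i _ => hx i, hbU fun i _ => hxb i⟩
  rw [this]
  have : Countable (TopologicalSpace.countableBasis E) :=
    (TopologicalSpace.countable_countableBasis E).to_subtype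
  refine MeasurableSet.iUnion fun b =>
    (MeasurableSet.const _).inter (MeasurableSet.iInter fun i => hX.meas_open ?_)
  exact TopologicalSpace.isOpen_of_mem_countableBasis (b i).2

theorem CompactCorr.argmin {S E : Type*} [MeasurableSpace S] [MetricSpace E]
    {X : S → Set E} (hX : CompactCorr X) {c : E → ℝ} (hc : Continuous c) :
    CompactCorr (fun s => {x | x ∈ X s ∧ ∀ y ∈ X s, c x ≤ c y}) := by
  refine ⟨fun s => ?_, fun s => ?_, fun C hC => ?_⟩
  · have : {x | x ∈ X s ∧ ∀ y ∈ X s, c x ≤ c y} =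
        X s ∩ ⋂ y ∈ X s, {x | c x ≤ c y} := by
      ext x; simp
    rw [this]
    refine (hX.compact s).inter_right ?_
    exact isClosed_biInter fun y _ => isClosed_le hc continuous_const
  · obtain ⟨x, hx, hmin⟩ := (hX.compact s).exists_isMinOn (hX.nonempty s) hc.continuousOn
    exact ⟨x, hx, fun y hy => hmin hy⟩
  · have : {s | ({x | x ∈ X s ∧ ∀ y ∈ X s, c x ≤ c y} ∩ C).Nonempty} =
        ⋂ q : ℚ, ({s | (X s ∩ {x | c x ≤ (q : ℝ)}).Nonempty}ᶜ ∪
          {s | (X s ∩ (C ∩ {x | c x ≤ (q : ℝ)})).Nonempty}) := by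
      ext s
      simp only [Set.mem_ofPred_eq, Set.mem_iInter, Set.mem_union, Set.mem_compl_iff]
      constructor
      · rintro ⟨x, ⟨hx, hmin⟩, hxC⟩ q
        by_cases h : (X s ∩ {x | c x ≤ (q : ℝ)}).Nonempty
        · right
          obtain ⟨y, hy, hyq⟩ := h
          exact ⟨x, hx, hxC, (hmin y hy).trans hyq⟩
        · exact Or.inl h
      · intro h
        obtain ⟨x₀, hx₀, hmin₀⟩ :=
          (hX.compact s).exists_isMinOn (hX.nonempty s) hc.continuousOn
        have hne : (X s ∩ C).Nonempty := by
          obtain ⟨q, hq⟩ := exists_rat_gt (c x₀)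
          rcases h q with h | ⟨y, hy, hyC, -⟩
          · exact absurd ⟨x₀, hx₀, hq.le⟩ h
          · exact ⟨y, hy, hyC⟩
        obtain ⟨x₁, hx₁, hmin₁⟩ :=
          ((hX.compact s).inter_right hC).exists_isMinOn hne hc.continuousOn
        refine ⟨x₁, ⟨hx₁.1, fun y hy => ?_⟩, hx₁.2⟩
        by_contra hlt
        push Not at hlt
        obtain ⟨q, hq1, hq2⟩ := exists_rat_btwn hlt
        rcases h q with h | ⟨z, hz, hzC, hzq⟩
        · exact h ⟨y, hy, hq1.le⟩
        · have h1 : c x₁ ≤ c z := hmin₁ ⟨hz, hzC⟩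
          have h2 : c z ≤ q := hzq
          linarith
    rw [this]
    refine MeasurableSet.iInter fun q => ((hX.meas _ ?_).compl).union (hX.meas _ ?_)
    · exact isClosed_le hc continuous_const
    · exact hC.inter (isClosed_le hc continuous_const)

theorem CompactCorr.refine_finset {S E ι : Type*} [MeasurableSpace S] [MetricSpace E]
    {X : S → Set E} (hX : CompactCorr X) (c : ι → E → ℝ) (hc : ∀ i, Continuous (c i))
    (t : Finset ι) :
    ∃ Y : S → Set E, CompactCorr Y ∧ (∀ s, Y s ⊆ X s) ∧
      ∀ i ∈ t, ∀ s, ∀ x ∈ Y s, ∀ y ∈ Y s, c i x = c i y := by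
  classical
  induction t using Finset.induction_on with
  | empty => exact ⟨X, hX, fun s => subset_rfl, by simp⟩
  | insert i t hi ih =>
    obtain ⟨Y, hY, hYX, h⟩ := ih
    refine ⟨_, hY.argmin (hc i), fun s x hx => hYX s hx.1, ?_⟩
    intro j hj s x hx y hy
    rcases Finset.mem_insert.1 hj with rfl | hj
    · exact le_antisymm (hx.2 y hy.1) (hy.2 x hx.1)
    · exact h j hj s x hx.1 y hy.1

theorem CompactCorr.exists_selection {S E : Type*} [MeasurableSpace S] [NormedAddCommGroup E]
    [NormedSpace ℝ E] [FiniteDimensional ℝ E] [MeasurableSpace E] [BorelSpace E]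
    {X : S → Set E} (hX : CompactCorr X) :
    ∃ g : S → E, Measurable g ∧ ∀ s, g s ∈ X s := by
  let b := Module.finBasis ℝ E
  obtain ⟨Y, hY, hYX, h⟩ := hX.refine_finset (fun i => b.coord i)
    (fun i => (b.coord i).continuous_of_finiteDimensional) Finset.univ
  choose g hg using hY.nonempty
  refine ⟨g, measurable_of_isClosed fun C hC => ?_, fun s => hYX s (hg s)⟩
  convert hY.meas C hC using 1
  ext s
  constructor
  · intro hs
    exact ⟨g s, hg s, hs⟩
  · rintro ⟨x, hx, hxC⟩
    have : g s = x := b.ext_elem fun i => h i (Finset.mem_univ _) s _ (hg s) _ hx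
    simpa [this] using hxC

theorem carath_fin {m : ℕ} {A : Set (EuclideanSpace ℝ (Fin m))} {x : EuclideanSpace ℝ (Fin m)}
    (hx : x ∈ convexHull ℝ A) :
    ∃ p : Fin (m + 1) → ℝ × EuclideanSpace ℝ (Fin m),
      (∀ i, 0 ≤ (p i).1 ∧ (p i).1 ≤ 1 ∧ (p i).2 ∈ A) ∧ ∑ i, (p i).1 = 1 ∧
        ∑ i, (p i).1 • (p i).2 = x := by
  classical
  obtain ⟨ι, _, z, w, hz, hind, hw, hw1, hwx⟩ := eq_pos_convex_span_of_mem_convexHull hx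
  obtain ⟨a₀, ha₀⟩ : A.Nonempty := convexHull_nonempty_iff.1 ⟨x, hx⟩
  have hcard : Fintype.card ι ≤ Fintype.card (Fin (m + 1)) := by
    refine hind.card_le_finrank_succ.trans ?_
    have := Submodule.finrank_le (vectorSpan ℝ (Set.range z))
    simp at this ⊢
    exact this
  obtain ⟨e⟩ := Function.Embedding.nonempty_of_card_le hcard
  have hle : ∀ i, w i ≤ 1 := fun i => by
    rw [← hw1]; exact Finset.single_le_sum (fun j _ => (hw j).le) (Finset.mem_univ i)
  let p : Fin (m + 1) → ℝ × EuclideanSpace ℝ (Fin m) :=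
    Function.extend e (fun i => (w i, z i)) (fun _ => (0, a₀))
  have hpe : ∀ i, p (e i) = (w i, z i) := fun i => e.injective.extend_apply _ _ i
  have hpn : ∀ j, (∀ i, e i ≠ j) → p j = (0, a₀) := fun j hj =>
    Function.extend_apply' _ _ _ (by rintro ⟨i, hi⟩; exact hj i hi)
  refine ⟨p, fun j => ?_, ?_, ?_⟩
  · by_cases hj : ∃ i, e i = j
    · obtain ⟨i, rfl⟩ := hj
      rw [hpe]
      exact ⟨(hw i).le, hle i, hz ⟨i, rfl⟩⟩
    · push Not at hj
      rw [hpn j hj]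
      exact ⟨le_rfl, zero_le_one, ha₀⟩
  · rw [← hw1]
    symm
    refine Fintype.sum_of_injective e e.injective _ _ (fun j hj => ?_) fun i => by rw [hpe]
    rw [hpn j fun i hi => hj ⟨i, hi⟩]
  · rw [← hwx]
    symm
    refine Fintype.sum_of_injective e e.injective _ _ (fun j hj => ?_) fun i => by rw [hpe]
    rw [hpn j fun i hi => hj ⟨i, hi⟩]; simp

/-- Measurable Caratheodory decomposition. -/
theorem measurable_carath {m : ℕ} {S : Type*} [MeasurableSpace S]
    {F : S → Set (EuclideanSpace ℝ (Fin m))} (hF : CompactCorr F)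
    {f : S → EuclideanSpace ℝ (Fin m)} (hf : Measurable f)
    (hfF : ∀ s, f s ∈ convexHull ℝ (F s)) :
    ∃ (a : Fin (m + 1) → S → ℝ) (g : Fin (m + 1) → S → EuclideanSpace ℝ (Fin m)),
      (∀ i, Measurable (a i)) ∧ (∀ i, Measurable (g i)) ∧ (∀ i s, 0 ≤ a i s) ∧
      (∀ s, ∑ i, a i s = 1) ∧ (∀ i s, g i s ∈ F s) ∧ ∀ s, ∑ i, a i s • g i s = f s := by
  have h1 : CompactCorr (fun s => ({f s} : Set (EuclideanSpace ℝ (Fin m)))) := by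
    refine ⟨fun s => isCompact_singleton, fun s => Set.singleton_nonempty _, fun C hC => ?_⟩
    convert hf hC.measurableSet using 1
    ext s; simp
  have h2 : CompactCorr (fun _ : S => Set.Icc (0 : ℝ) 1) :=
    ⟨fun s => isCompact_Icc, fun s => ⟨0, by simp⟩, fun C hC => MeasurableSet.const _⟩
  have h3 := h1.prod (CompactCorr.pi (k := m + 1) (h2.prod hF))
  let c : EuclideanSpace ℝ (Fin m) × (Fin (m + 1) → ℝ × EuclideanSpace ℝ (Fin m)) → ℝ :=
    fun z => |∑ i, (z.2 i).1 - 1| + ‖∑ i, (z.2 i).1 • (z.2 i).2 - z.1‖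
  have hc : Continuous c := by fun_prop
  obtain ⟨g, hg, hgm⟩ := (h3.argmin hc).exists_selection
  have hg0 : ∀ s, c (g s) = 0 := by
    intro s
    obtain ⟨p, hp, hp1, hpx⟩ := carath_fin (hfF s)
    have := (hgm s).2 (f s, p) ⟨rfl, fun i _ => ⟨⟨(hp i).1, (hp i).2.1⟩, (hp i).2.2⟩⟩
    have h0 : c (f s, p) = 0 := by simp [c, hp1, hpx]
    rw [h0] at this
    exact le_antisymm this (by positivity)
  have hgs : ∀ s, (∑ i, ((g s).2 i).1 = 1) ∧ ∑ i, ((g s).2 i).1 • ((g s).2 i).2 = f s := by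
    intro s
    have h0 := hg0 s
    have e1 : (g s).1 = f s := (hgm s).1.1
    simp only [c] at h0
    have h4 := (add_eq_zero_iff_of_nonneg (abs_nonneg _) (norm_nonneg _)).1 h0
    rw [abs_eq_zero, norm_eq_zero, sub_eq_zero, sub_eq_zero, e1] at h4
    exact h4
  refine ⟨fun i s => ((g s).2 i).1, fun i s => ((g s).2 i).2, ?_, ?_, ?_, ?_, ?_, ?_⟩
  · intro i; fun_prop
  · intro i; fun_prop
  · intro i s; exact ((hgm s).1.2 i trivial).1.1
  · exact fun s => (hgs s).1
  · intro i s; exact ((hgm s).1.2 i trivial).2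
  · exact fun s => (hgs s).2

theorem hilbert_exists_extreme {H : Type*} [NormedAddCommGroup H] [InnerProductSpace ℝ H]
    [CompleteSpace H] {W : Set H} (hconv : Convex ℝ W) (hcl : IsClosed W)
    (hbd : Bornology.IsBounded W) (hne : W.Nonempty) : (W.extremePoints ℝ).Nonempty := by
  let J : H → WeakDual ℝ H := fun x => StrongDual.toWeakDual (InnerProductSpace.toDual ℝ H x)
  have hJ : ∀ x z, J x z = inner ℝ x z := fun x z => by
    simp [J]
  let J' : WeakDual ℝ H → H := fun T =>
    (InnerProductSpace.toDual ℝ H).symm (WeakDual.toStrongDual T)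
  have hJ' : ∀ T z, inner ℝ (J' T) z = T z := fun T z => by
    simp [J']
  have hJJ : ∀ x, J' (J x) = x := fun x => by simp [J, J']
  have hJJ' : ∀ x, J (J' x) = x := fun x => by simp [J, J']
  let W' : Set (WeakDual ℝ H) := {T | J' T ∈ W}
  have hclosed : IsClosed W' := by
    rw [← isOpen_compl_iff, isOpen_iff_mem_nhds]
    intro T hT
    obtain ⟨f, u, hfu, hu⟩ := geometric_hahn_banach_point_closed hconv hcl hT
    obtain ⟨z, rfl⟩ := (InnerProductSpace.toDual ℝ H).surjective f
    have hopen : IsOpen {T : WeakDual ℝ H | T z < u} :=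
      isOpen_lt (WeakDual.eval_continuous z) continuous_const
    refine Filter.mem_of_superset (hopen.mem_nhds ?_) ?_
    · simp only [Set.mem_ofPred_eq]
      rw [← hJ', real_inner_comm]; simpa using hfu
    · intro T' hT' hW
      have := hu _ hW
      simp only [Set.mem_ofPred_eq] at hT'
      rw [← hJ', real_inner_comm] at hT'
      simp at this
      linarith
  have hcomp : IsCompact W' := by
    refine WeakDual.isCompact_of_bounded_of_closed ?_ hclosed
    obtain ⟨R, hR⟩ := hbd.exists_norm_le
    refine (Metric.isBounded_iff_subset_closedBall (0 : StrongDual ℝ H)).2 ⟨R, ?_⟩ 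
    intro T hT
    have : ‖(InnerProductSpace.toDual ℝ H).symm T‖ ≤ R := hR _ hT
    simpa using this
  have hne' : W'.Nonempty := by
    obtain ⟨x, hx⟩ := hne
    exact ⟨J x, by simpa [W', hJJ] using hx⟩
  have : LocallyConvexSpace ℝ (WeakDual ℝ H) := WeakBilin.locallyConvexSpace
  obtain ⟨T, hT⟩ := hcomp.extremePoints_nonempty hne'
  refine ⟨J' T, hT.1, ?_⟩
  intro x hx y hy hxy
  have h1 : J x = T := by
    have hx' : J x ∈ W' := by simpa [W', hJJ] using hx
    have hy' : J y ∈ W' := by simpa [W', hJJ] using hy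
    refine hT.2 hx' hy' ?_
    obtain ⟨a, b, ha, hb, hab, h⟩ := hxy
    refine ⟨a, b, ha, hb, hab, ?_⟩
    have := congrArg J h
    rw [hJJ'] at this
    rw [← this]
    simp [J]
  rw [← h1, hJJ]

theorem lp_extreme {S : Type*} [MeasurableSpace S] (lam : Measure S) {k : ℕ} {ι : Type*}
    (R : Lp ℝ 2 lam) (q : ι → Fin k → Lp ℝ 2 lam) (x₀ : Fin k → Lp ℝ 2 lam)
    (h0 : ∀ i, 0 ≤ x₀ i) (h1 : ∑ i, x₀ i = R) :
    ∃ x : Fin k → Lp ℝ 2 lam, (∀ i, 0 ≤ x i) ∧ ∑ i, x i = R ∧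
      (∀ t, ∑ i, inner ℝ (x i) (q t i) = ∑ i, inner ℝ (x₀ i) (q t i)) ∧
      ∀ i j, i ≠ j → ∀ d : Lp ℝ 2 lam, |d| ≤ x i → |d| ≤ x j →
        (∀ t, inner ℝ d (q t i) = inner ℝ d (q t j)) → d = 0 := by
  classical
  let H := PiLp 2 (fun _ : Fin k => Lp ℝ 2 lam)
  let W : Set H := {x | (∀ i, 0 ≤ x i) ∧ ∑ i, x i = R ∧
      (∀ t, ∑ i, inner ℝ (x i) (q t i) = ∑ i, inner ℝ (x₀ i) (q t i))}
  have hcont : ∀ i, Continuous (fun x : PiLp 2 (fun _ : Fin k => Lp ℝ 2 lam) => x i) := fun i => by fun_prop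
  have hne : W.Nonempty := ⟨WithLp.toLp 2 x₀, h0, h1, fun t => rfl⟩
  have hcl : IsClosed W := by
    have e : W = (⋂ i, {x | 0 ≤ x i}) ∩ ({x | ∑ i, x i = R} ∩
        ⋂ t, {x | ∑ i, inner ℝ (x i) (q t i) = ∑ i, inner ℝ (x₀ i) (q t i)}) := by
      ext x; simp [W]
    rw [e]
    refine IsClosed.inter ?_ (IsClosed.inter ?_ ?_)
    · exact isClosed_iInter fun i => isClosed_le continuous_const (hcont i)
    · exact isClosed_eq (continuous_finsetSum _ fun i _ => hcont i) continuous_const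
    · exact isClosed_iInter fun t => isClosed_eq
        (continuous_finsetSum _ fun i _ => (hcont i).inner continuous_const) continuous_const
  have hsm : ∀ (a : ℝ) (z : Lp ℝ 2 lam), 0 ≤ a → 0 ≤ z → 0 ≤ a • z :=
    fun a z ha hz => by
      rw [← Lp.coeFn_nonneg] at hz ⊢
      filter_upwards [hz, Lp.coeFn_smul a z] with s h1 h2
      rw [h2]
      exact mul_nonneg ha h1
  have hconv : Convex ℝ W := by
    rintro x ⟨hx0, hx1, hx2⟩ y ⟨hy0, hy1, hy2⟩ a b ha hb hab
    refine ⟨fun i => ?_, ?_, fun t => ?_⟩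
    · have : (a • x + b • y) i = a • x i + b • y i := rfl
      rw [this]
      exact add_nonneg (hsm a _ ha (hx0 i)) (hsm b _ hb (hy0 i))
    · have : ∀ i, (a • x + b • y) i = a • x i + b • y i := fun i => rfl
      simp only [this, Finset.sum_add_distrib, ← Finset.smul_sum, hx1, hy1]
      rw [← add_smul, hab, one_smul]
    · have : ∀ i, (a • x + b • y) i = a • x i + b • y i := fun i => rfl
      simp only [this, inner_add_left, real_inner_smul_left, Finset.sum_add_distrib,
        ← Finset.mul_sum, hx2, hy2]
      rw [← add_mul, hab, one_mul]
  have hbd : Bornology.IsBounded W := by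
    refine isBounded_iff_forall_norm_le.2 ⟨√(∑ _i : Fin k, ‖R‖ ^ 2), ?_⟩
    rintro x ⟨hx0, hx1, hx2⟩
    rw [PiLp.norm_eq_of_L2]
    refine Real.sqrt_le_sqrt (Finset.sum_le_sum fun i _ => ?_)
    gcongr
    refine norm_le_norm_of_abs_le_abs ?_
    have h3 : x i ≤ R := by
      rw [← hx1]; exact Finset.single_le_sum (fun j _ => hx0 j) (Finset.mem_univ i)
    rw [abs_of_nonneg (hx0 i), abs_of_nonneg ((hx0 i).trans h3)]
    exact h3
  obtain ⟨x, ⟨hx0, hx1, hx2⟩, hext⟩ := hilbert_exists_extreme hconv hcl hbd hne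
  refine ⟨x, hx0, hx1, hx2, fun i j hij d hdi hdj hq => ?_⟩
  let e : Fin k → ℝ := fun l => if l = i then 1 else if l = j then -1 else 0
  let D : H := WithLp.toLp 2 (fun l => e l • d)
  have hsum : ∑ l, e l = 0 := by
    have : ∀ l, e l = (if l = i then 1 else 0) + (if l = j then -1 else 0) := by
      intro l
      by_cases h1 : l = i
      · subst h1; simp [e, hij]
      · simp [e, h1]
    simp [this, Finset.sum_add_distrib]
  have hsum2 : ∀ t, ∑ l, e l * inner ℝ d (q t l) = 0 := by
    intro t
    have : ∀ l, e l * inner ℝ d (q t l) = e l * inner ℝ d (q t i) := by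
      intro l
      by_cases h1 : l = i
      · rw [h1]
      · by_cases h2 : l = j
        · rw [h2, hq]
        · simp [e, h1, h2]
    simp only [this, ← Finset.sum_mul, hsum, zero_mul]
  have hmem : ∀ σ : ℝ, σ = 1 ∨ σ = -1 → x + σ • D ∈ W := by
    intro σ hσ
    have hc : ∀ l, (x + σ • D) l = x l + σ • e l • d := fun l => rfl
    have hd1 : -x i ≤ d ∧ d ≤ x i :=
      ⟨neg_le.1 ((neg_le_abs d).trans hdi), (le_abs_self d).trans hdi⟩
    have hd2 : -x j ≤ d ∧ d ≤ x j :=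
      ⟨neg_le.1 ((neg_le_abs d).trans hdj), (le_abs_self d).trans hdj⟩
    refine ⟨fun l => ?_, ?_, fun t => ?_⟩
    · rw [hc]
      by_cases h1 : l = i
      · subst h1
        rcases hσ with rfl | rfl
        · have : x l + (1 : ℝ) • e l • d = d - (- x l) := by simp [e]; abel
          rw [this]; exact sub_nonneg.2 hd1.1
        · have : x l + (-1 : ℝ) • e l • d = x l - d := by simp [e]; abel
          rw [this]; exact sub_nonneg.2 hd1.2
      · by_cases h2 : l = j
        · subst h2
          rcases hσ with rfl | rfl
          · have : x l + (1 : ℝ) • e l • d = x l - d := by simp [e, h1]; abel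
            rw [this]; exact sub_nonneg.2 hd2.2
          · have : x l + (-1 : ℝ) • e l • d = d - (- x l) := by simp [e, h1]; abel
            rw [this]; exact sub_nonneg.2 hd2.1
        · simpa [e, h1, h2] using hx0 l
    · simp only [hc, Finset.sum_add_distrib, ← Finset.smul_sum, ← Finset.sum_smul, hsum, hx1]
      simp
    · simp only [hc, inner_add_left, real_inner_smul_left, Finset.sum_add_distrib,
        ← Finset.mul_sum, hsum2, hx2]
      simp
  have := hext (hmem 1 (Or.inl rfl)) (hmem (-1) (Or.inr rfl))
    ⟨1/2, 1/2, by norm_num, by norm_num, by norm_num, by module⟩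
  have hD : D = 0 := by simpa using this
  have : D i = 0 := by rw [hD]; rfl
  simpa [D, e] using this

theorem inner_Lp_toLp {S : Type*} [MeasurableSpace S] {lam : Measure S} (x : Lp ℝ 2 lam)
    {u w : S → ℝ} (hw : MemLp w 2 lam) (hu : x =ᵐ[lam] u) :
    inner ℝ x (hw.toLp w) = ∫ s, u s * w s ∂lam := by
  rw [L2.inner_def]
  refine integral_congr_ae ?_
  filter_upwards [hu, hw.coeFn_toLp] with s h1 h2
  simp [h1, h2, mul_comm]

/-- Conditional Lyapunov theorem (purification of weights). -/
theorem purify {S : Type*} (G : MeasurableSpace S) [mS : MeasurableSpace S]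
    (lam : Measure S) [IsFiniteMeasure lam] (hG : G ≤ mS)
    (h_no_atom : ∀ D : Set S, MeasurableSet[mS] D → ¬ IsGAtom mS G lam D)
    {m k : ℕ} (hk : 0 < k) (a : Fin k → S → ℝ) (g : Fin k → S → EuclideanSpace ℝ (Fin m))
    (ha : ∀ i, Measurable[mS] (a i)) (hg : ∀ i, Measurable[mS] (g i))
    (ha0 : ∀ i s, 0 ≤ a i s) (ha1 : ∀ s, ∑ i, a i s = 1) (hgi : ∀ i, Integrable (g i) lam) :
    ∃ J : S → Fin k, Measurable[mS] J ∧ ∀ A, MeasurableSet[G] A → ∀ l,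
      ∫ s in A, g (J s) s l ∂lam = ∫ s in A, ∑ i, a i s * g i s l ∂lam := by
  classical
  let ρ : S → ℝ := fun s => 1 + ∑ i, ‖g i s‖
  have hρ1 : ∀ s, 1 ≤ ρ s := fun s => by
    simp only [ρ]; linarith [Finset.sum_nonneg (fun i (_ : i ∈ Finset.univ) => norm_nonneg (g i s))]
  have hρm : Measurable[mS] ρ := by fun_prop
  have hρi : Integrable ρ lam :=
    (integrable_const 1).add (integrable_finsetSum _ fun i _ => (hgi i).norm)
  let r : S → ℝ := fun s => √(ρ s)
  have hrm : Measurable[mS] r := hρm.sqrt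
  have hr1 : ∀ s, 1 ≤ r s := fun s => Real.one_le_sqrt.2 (hρ1 s)
  have hr0 : ∀ s, 0 < r s := fun s => lt_of_lt_of_le one_pos (hr1 s)
  have hrr : ∀ s, r s * r s = ρ s := fun s => Real.mul_self_sqrt (by linarith [hρ1 s])
  have hrL : MemLp r 2 lam := by
    rw [memLp_two_iff_integrable_sq hrm.aestronglyMeasurable]
    refine hρi.congr (Filter.Eventually.of_forall fun s => ?_)
    simp only [pow_two, hrr]
  have hgl : ∀ i l s, |g i s l| ≤ r s * r s := fun i l s => by
    rw [hrr]
    have h1 : |g i s l| ≤ ‖g i s‖ := by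
      simpa using PiLp.norm_apply_le (g i s) l
    have h2 : ‖g i s‖ ≤ ∑ i, ‖g i s‖ :=
      Finset.single_le_sum (fun j _ => norm_nonneg (g j s)) (Finset.mem_univ i)
    simp only [ρ]; linarith
  have hglm : ∀ i l, Measurable[mS] (fun s => g i s l) := fun i l => by
    have := hg i
    fun_prop
  have hmem : ∀ u : S → ℝ, Measurable[mS] u → (∀ᵐ s ∂lam, |u s| ≤ r s) → MemLp u 2 lam := by
    intro u hu hb
    refine hrL.mono hu.aestronglyMeasurable ?_
    filter_upwards [hb] with s hs
    rw [Real.norm_eq_abs, Real.norm_eq_abs, abs_of_pos (hr0 s)]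
    exact hs
  -- the data
  let ι := {A : Set S // MeasurableSet[G] A} × Fin m
  let qf : ι → Fin k → S → ℝ := fun t i => t.1.1.indicator (fun s => g i s t.2 / r s)
  have hq : ∀ t i, MemLp (qf t i) 2 lam := by
    intro t i
    refine hmem _ (((hglm i t.2).div hrm).indicator (hG _ t.1.2)) (Filter.Eventually.of_forall ?_)
    intro s
    by_cases hs : s ∈ t.1.1
    · simp only [qf, Set.indicator_of_mem hs, abs_div, abs_of_pos (hr0 s)]
      rw [div_le_iff₀ (hr0 s)]
      exact hgl i t.2 s
    · simp only [qf, Set.indicator_of_notMem hs, abs_zero]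
      exact (hr0 s).le
  have ha_le : ∀ i s, a i s ≤ 1 := fun i s => by
    rw [← ha1 s]; exact Finset.single_le_sum (fun j _ => ha0 j s) (Finset.mem_univ i)
  have hx₀ : ∀ i, MemLp (fun s => a i s * r s) 2 lam := by
    intro i
    refine hmem _ ((ha i).mul hrm) (Filter.Eventually.of_forall fun s => ?_)
    rw [abs_mul, abs_of_nonneg (ha0 i s), abs_of_pos (hr0 s)]
    exact mul_le_of_le_one_left (hr0 s).le (ha_le i s)
  obtain ⟨x, hx0, hx1, hx2, hx3⟩ := lp_extreme lam (hrL.toLp r)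
    (fun t i => (hq t i).toLp (qf t i)) (fun i => (hx₀ i).toLp _)
    (fun i => by
      rw [← Lp.coeFn_nonneg]
      filter_upwards [(hx₀ i).coeFn_toLp] with s hs
      rw [hs]
      exact mul_nonneg (ha0 i s) (hr0 s).le)
    (by
      apply Lp.ext
      have h1 : ∀ᵐ s ∂lam, ∀ i, ((hx₀ i).toLp _ : S → ℝ) s = a i s * r s :=
        ae_all_iff.2 fun i => (hx₀ i).coeFn_toLp
      filter_upwards [h1, hrL.coeFn_toLp,
        Lp.coeFn_fun_finsetSum Finset.univ (fun i => (hx₀ i).toLp _)] with s h1 h2 h3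
      rw [h3, h2]
      simp only [h1, ← Finset.sum_mul, ha1, one_mul])
  have hbm : ∀ i, Measurable[mS] (x i : S → ℝ) := fun i => (Lp.stronglyMeasurable (x i)).measurable
  have hb0 : ∀ᵐ s ∂lam, ∀ i, 0 ≤ (x i : S → ℝ) s :=
    ae_all_iff.2 fun i => (Lp.coeFn_nonneg _).2 (hx0 i)
  have hb1 : ∀ᵐ s ∂lam, ∑ i, (x i : S → ℝ) s = r s := by
    have h := Lp.coeFn_fun_finsetSum Finset.univ x
    rw [hx1] at h
    filter_upwards [h, hrL.coeFn_toLp] with s h1 h2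
    rw [← h2, h1]
  have hbr : ∀ᵐ s ∂lam, ∀ i, (x i : S → ℝ) s ≤ r s := by
    filter_upwards [hb0, hb1] with s h0 h1 i
    rw [← h1]; exact Finset.single_le_sum (fun j _ => h0 j) (Finset.mem_univ i)
  have hprod : ∀ i j, i ≠ j → ∀ᵐ s ∂lam, (x i : S → ℝ) s * (x j : S → ℝ) s = 0 := by
    intro i j hij
    by_contra hcon
    rw [ae_iff] at hcon
    let v : ℕ → S → ℝ := fun n s => if hn : n < m then
      ((x i : S → ℝ) s * (x j : S → ℝ) s / (r s * r s)) * (g i s ⟨n, hn⟩ - g j s ⟨n, hn⟩) else 0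
    have hgli : ∀ i l, Integrable (fun s => g i s l) lam := fun i l =>
      (hgi i).mono (hglm i l).aestronglyMeasurable
        (Filter.Eventually.of_forall fun s => PiLp.norm_apply_le (g i s) l)
    have hv : ∀ n, Integrable (v n) lam := by
      intro n
      by_cases hn : n < m
      · simp only [v, hn, dif_pos]
        refine ((hgli i ⟨n, hn⟩).sub (hgli j ⟨n, hn⟩)).bdd_mul (c := 1) ?_ ?_
        · exact (((hbm i).mul (hbm j)).div (hrm.mul hrm)).aestronglyMeasurable
        · filter_upwards [hb0, hbr] with s h0 h1
          rw [Real.norm_eq_abs, abs_of_nonneg (div_nonneg (mul_nonneg (h0 i) (h0 j))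
            (mul_pos (hr0 s) (hr0 s)).le), div_le_one (mul_pos (hr0 s) (hr0 s))]
          exact mul_le_mul (h1 i) (h1 j) (h0 j) (hr0 s).le
      · simp only [v, hn]; simp
    obtain ⟨φ, hφm, hφb, hφs, hφ0, hφk⟩ := key_lemma G lam hG h_no_atom v hv m
      {s | ¬ (x i : S → ℝ) s * (x j : S → ℝ) s = 0}
      ((((hbm i).mul (hbm j)) (measurableSet_singleton (0 : ℝ))).compl) hcon
    let df : S → ℝ := fun s => φ s * ((x i : S → ℝ) s * (x j : S → ℝ) s / r s)
    have hdm : Measurable[mS] df := hφm.mul (((hbm i).mul (hbm j)).div hrm)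
    have hdb : ∀ᵐ s ∂lam, |df s| ≤ (x i : S → ℝ) s ∧ |df s| ≤ (x j : S → ℝ) s := by
      filter_upwards [hb0, hbr] with s h0 h1
      have e : |df s| ≤ (x i : S → ℝ) s * (x j : S → ℝ) s / r s := by
        simp only [df]
        rw [abs_mul, abs_of_nonneg (div_nonneg (mul_nonneg (h0 i) (h0 j)) (hr0 s).le)]
        exact mul_le_of_le_one_left (div_nonneg (mul_nonneg (h0 i) (h0 j)) (hr0 s).le) (hφb s)
      constructor
      · refine e.trans ?_
        rw [div_le_iff₀ (hr0 s)]
        exact mul_le_mul_of_nonneg_left (h1 j) (h0 i)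
      · refine e.trans ?_
        rw [div_le_iff₀ (hr0 s), mul_comm]
        exact mul_le_mul_of_nonneg_left (h1 i) (h0 j)
    have hdL : MemLp df 2 lam := by
      refine hmem df hdm ?_
      filter_upwards [hdb, hbr] with s h1 h2
      exact h1.1.trans (h2 i)
    have hd0 := hx3 i j hij (hdL.toLp df)
      (by
        rw [← Lp.coeFn_le]
        filter_upwards [hdb, Lp.coeFn_abs (hdL.toLp df), hdL.coeFn_toLp] with s h1 h2 h3
        rw [h2, h3]; exact h1.1)
      (by
        rw [← Lp.coeFn_le]
        filter_upwards [hdb, Lp.coeFn_abs (hdL.toLp df), hdL.coeFn_toLp] with s h1 h2 h3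
        rw [h2, h3]; exact h1.2)
      (by
        intro t
        have hi1 : Integrable (fun s => df s * qf t i s) lam := hdL.integrable_mul (hq t i)
        have hi2 : Integrable (fun s => df s * qf t j s) lam := hdL.integrable_mul (hq t j)
        rw [inner_Lp_toLp _ _ hdL.coeFn_toLp, inner_Lp_toLp _ _ hdL.coeFn_toLp, ← sub_eq_zero,
          ← integral_sub hi1 hi2]
        have e : (fun s => df s * qf t i s - df s * qf t j s) =
            t.1.1.indicator (φ * v t.2) := by
          funext s
          by_cases hs : s ∈ t.1.1
          · simp only [qf, Set.indicator_of_mem hs, df, Pi.mul_apply, v, t.2.2, dif_pos, Fin.eta]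
            have := (hr0 s).ne'
            field_simp
          · simp [qf, Set.indicator_of_notMem hs]
        rw [e, integral_indicator (hG _ t.1.2)]
        have hi : Integrable (φ * v t.2) lam :=
          (hv t.2).bdd_mul hφm.aestronglyMeasurable (Filter.Eventually.of_forall hφb)
        rw [← setIntegral_condExp hG hi t.1.2]
        rw [setIntegral_congr_ae (g := fun _ => (0 : ℝ)) (hG _ t.1.2)]
        · simp
        · filter_upwards [hφk t.2 t.2.2] with s hs _ using hs)
    apply hφ0
    have h4 : df =ᵐ[lam] 0 := by
      rw [← MemLp.toLp_eq_toLp_iff hdL MemLp.zero, hd0]; rfl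
    filter_upwards [h4] with s hs
    by_cases hsD : (x i : S → ℝ) s * (x j : S → ℝ) s = 0
    · exact hφs s (fun hc => hc hsD)
    · simp only [df, Pi.zero_apply, mul_eq_zero, div_eq_zero_iff, (hr0 s).ne', or_false] at hs
      rcases hs with h | h
      · exact h
      · exact absurd (mul_eq_zero.2 h) hsD
  -- index choice
  let pick : (Fin k → Prop) → Fin k := fun P => if h : ∃ i, P i then h.choose else ⟨0, hk⟩
  have hpick : ∀ P : Fin k → Prop, (∃ i, P i) → P (pick P) := fun P h => by
    simp only [pick, h, dif_pos]; exact h.choose_spec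
  let J : S → Fin k := fun s => pick (fun i => (x i : S → ℝ) s ≠ 0)
  have hJm : Measurable[mS] J := by
    have h1 : Measurable[mS] (fun s => (fun i => (x i : S → ℝ) s ≠ 0 : Fin k → Prop)) := by
      refine measurable_pi_lambda _ fun i => ?_
      exact measurable_to_prop (by
        have := ((hbm i) (measurableSet_singleton (0 : ℝ))).compl
        convert this using 1
        ext s; simp)
    exact (measurable_of_finite pick).comp h1
  refine ⟨J, hJm, fun A hA l => ?_⟩
  have hprod' : ∀ᵐ s ∂lam, ∀ i j, i ≠ j → (x i : S → ℝ) s * (x j : S → ℝ) s = 0 := by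
    rw [ae_all_iff]; intro i
    rw [ae_all_iff]; intro j
    by_cases hij : i = j
    · simp [hij]
    · filter_upwards [hprod i j hij] with s hs _ using hs
  have hJ : ∀ᵐ s ∂lam, g (J s) s l = ∑ i, (x i : S → ℝ) s * (g i s l / r s) := by
    filter_upwards [hb1, hprod'] with s h1 h2
    have hex : ∃ i, (x i : S → ℝ) s ≠ 0 := by
      by_contra hcon
      push Not at hcon
      rw [Finset.sum_eq_zero fun i _ => hcon i] at h1
      exact (hr0 s).ne h1
    have hJs : (x (J s) : S → ℝ) s ≠ 0 := hpick _ hex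
    have hz : ∀ i, i ≠ J s → (x i : S → ℝ) s = 0 := fun i hi =>
      (mul_eq_zero.1 (h2 i (J s) hi)).resolve_right hJs
    rw [Finset.sum_eq_single (J s) (fun i _ hi => hz i hi) (by simp)] at h1
    rw [Finset.sum_eq_single (J s) (fun i _ hi => by rw [hz i hi, zero_mul]) (by simp), h1]
    field_simp [(hr0 s).ne']
  have hkey := hx2 (⟨A, hA⟩, l)
  have e1 : ∀ i, inner ℝ (x i) ((hq (⟨A, hA⟩, l) i).toLp _) =
      ∫ s, (x i : S → ℝ) s * qf (⟨A, hA⟩, l) i s ∂lam :=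
    fun i => inner_Lp_toLp _ _ (Filter.EventuallyEq.refl _ _)
  have e2 : ∀ i, inner ℝ ((hx₀ i).toLp _) ((hq (⟨A, hA⟩, l) i).toLp _) =
      ∫ s, (a i s * r s) * qf (⟨A, hA⟩, l) i s ∂lam :=
    fun i => inner_Lp_toLp _ _ (hx₀ i).coeFn_toLp
  have i1 : ∀ i, Integrable (fun s => (x i : S → ℝ) s * qf (⟨A, hA⟩, l) i s) lam :=
    fun i => (Lp.memLp (x i)).integrable_mul (hq _ i)
  have i2 : ∀ i, Integrable (fun s => (a i s * r s) * qf (⟨A, hA⟩, l) i s) lam :=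
    fun i => (hx₀ i).integrable_mul (hq _ i)
  simp only [e1, e2] at hkey
  rw [← integral_finsetSum _ fun i _ => i1 i, ← integral_finsetSum _ fun i _ => i2 i] at hkey
  rw [← integral_indicator (hG _ hA), ← integral_indicator (hG _ hA)]
  refine Eq.trans ?_ (hkey.trans ?_)
  · refine integral_congr_ae ?_
    filter_upwards [hJ] with s hs
    by_cases hsA : s ∈ A
    · simp only [qf, Set.indicator_of_mem hsA, hs]
    · simp [qf, Set.indicator_of_notMem hsA]
  · refine integral_congr_ae (Filter.Eventually.of_forall fun s => ?_)
    by_cases hsA : s ∈ A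
    · simp only [qf, Set.indicator_of_mem hsA]
      refine Finset.sum_congr rfl fun i _ => ?_
      have := (hr0 s).ne'
      field_simp
    · simp [qf, Set.indicator_of_notMem hsA]


theorem measurable_index_comp {S : Type*} [MeasurableSpace S] {m k : ℕ}
    (g : Fin k → S → EuclideanSpace ℝ (Fin m)) (J : S → Fin k) (hg : ∀ i, Measurable (g i))
    (hJ : Measurable J) : Measurable (fun s => g (J s) s) := by
  have h1 : Measurable (fun p : S × Fin k => g p.2 p.1) :=
    measurable_from_prod_countable_left (fun i => hg i)
  exact h1.comp (measurable_id.prodMk hJ)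

theorem setIntegral_coord {S : Type*} [MeasurableSpace S] {lam : Measure S} {m : ℕ}
    (A : Set S) (l : Fin m) (u : S → EuclideanSpace ℝ (Fin m)) (hu : Integrable u lam) :
    (∫ s in A, u s ∂lam) l = ∫ s in A, u s l ∂lam :=
  ((EuclideanSpace.proj l : EuclideanSpace ℝ (Fin m) →L[ℝ] ℝ).integral_comp_comm
      hu.integrableOn).symm

/-- **Dynkin–Evstigneev**: if `Σ` has no `G`-atom, then for any measurable, integrably
bounded, closed-valued correspondence `F` from `S` to `ℝ^m`, the sets of conditional
expectations of measurable selections of `F` and of its pointwise convex hull coincide. -/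
theorem condexp_selection_convexHull_of_no_atom
    {m : ℕ} {S : Type*} [mS : MeasurableSpace S]
    (lam : Measure S) [IsProbabilityMeasure lam]
    (G : MeasurableSpace S) (hG : G ≤ mS)
    (h_no_atom : ∀ D : Set S, MeasurableSet[mS] D → ¬ IsGAtom mS G lam D)
    (F : S → Set (EuclideanSpace ℝ (Fin m)))
    (hF_meas : ∀ U : Set (EuclideanSpace ℝ (Fin m)), IsOpen U →
      MeasurableSet[mS] {s | (F s ∩ U).Nonempty})
    (hF_closed : ∀ s, IsClosed (F s))
    -- integrably bounded
    (h : S → ℝ) (hh_int : Integrable h lam)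
    (hF_bd : ∀ s, ∀ y ∈ F s, ‖y‖ ≤ h s) :
    -- every measurable selection of `co F` has the same conditional expectation as some
    -- measurable selection of `F` ...
    (∀ f : S → EuclideanSpace ℝ (Fin m), Measurable[mS] f →
      (∀ s, f s ∈ convexHull ℝ (F s)) →
      ∃ g : S → EuclideanSpace ℝ (Fin m), Measurable[mS] g ∧ (∀ s, g s ∈ F s) ∧
        lam[g|G] =ᵐ[lam] lam[f|G]) ∧
    -- ... and conversely every measurable selection of `F` is a selection of `co F`
    (∀ g : S → EuclideanSpace ℝ (Fin m), (∀ s, g s ∈ F s) →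
      ∀ s, g s ∈ convexHull ℝ (F s)) := by
  refine ⟨fun f hf hfF => ?_, fun g hg s => subset_convexHull ℝ _ (hg s)⟩
  have hne : ∀ s, (F s).Nonempty := fun s => convexHull_nonempty_iff.1 ⟨f s, hfF s⟩
  have hFball : ∀ s, F s ⊆ Metric.closedBall 0 (h s) := fun s y hy => by
    simpa using hF_bd s y hy
  have hFc : @CompactCorr S _ mS _ F :=
    @CompactCorr.of_open S _ mS _ F (fun s => (isCompact_closedBall _ _).of_isClosed_subset (hF_closed s) (hFball s))
      hne hF_meas
  have hfb : ∀ s, ‖f s‖ ≤ h s := fun s => by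
    simpa using convexHull_min (hFball s) (convex_closedBall _ _) (hfF s)
  obtain ⟨a, g, ha, hg, ha0, ha1, hgF, hsum⟩ := @measurable_carath m S mS F hFc f hf hfF
  have hIntg : ∀ u : S → EuclideanSpace ℝ (Fin m), Measurable[mS] u → (∀ s, ‖u s‖ ≤ h s) →
      Integrable u lam := fun u hu hb =>
    hh_int.mono' hu.aestronglyMeasurable (Filter.Eventually.of_forall hb)
  have hgi : ∀ i, Integrable (g i) lam := fun i => hIntg _ (hg i) fun s => hF_bd s _ (hgF i s)
  obtain ⟨J, hJ, hJint⟩ :=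
    @purify S G mS lam _ hG h_no_atom m (m + 1) (Nat.succ_pos m) a g ha hg ha0 ha1 hgi
  have hgm : Measurable[mS] (fun s => g (J s) s) := @measurable_index_comp S mS m (m + 1) g J hg hJ
  have hgint := hIntg _ hgm fun s => hF_bd s _ (hgF (J s) s)
  have hfint := hIntg f hf hfb
  refine ⟨fun s => g (J s) s, hgm, fun s => hgF _ _, ?_⟩
  refine ae_eq_condExp_of_forall_setIntegral_eq hG hfint
    (fun A _ _ => integrable_condExp.integrableOn) (fun A hA _ => ?_)
    stronglyMeasurable_condExp.aestronglyMeasurable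
  rw [setIntegral_condExp hG hgint hA]
  ext l
  have hproj : ∀ u : S → EuclideanSpace ℝ (Fin m), Integrable u lam →
      (∫ s in A, u s ∂lam) l = ∫ s in A, u s l ∂lam := fun u hu =>
    @setIntegral_coord S mS lam m A l u hu
  rw [hproj _ hgint, hproj _ hfint, hJint A hA l]
  congr 1
  funext s
  rw [← hsum s]
  simp
end

section
/- Let (S, Sigma, lambda) be an atomless probability space and G a sub-sigma-algebra of Sigma such that Sigma has no G-atom. Let P be a Sigma-measurable, closed-valued correspondence from S to R^m whose values are uniformly bounded in norm by a constant C, and let rho_1, ..., rho_J : S -> R be nonnegative lambda-integrable functions. Then for every Sigma-measurable selection v' of the pointwise convex hull co(P) there exists a Sigma-measurable selection v* of P such that E(v* rho_j | G) = E(v' rho_j | G) lambda-almost everywhere for each j = 1, ..., J (where v rho_j denotes the R^m-valued function s -> rho_j(s) v(s)). -/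
open MeasureTheory

lemma hilbert_ext {H : Type*} [NormedAddCommGroup H] [InnerProductSpace ℝ H] [CompleteSpace H]
    (K : Set H) (hne : K.Nonempty) (R : ℝ) (hR : ∀ g ∈ K, ‖g‖ ≤ R)
    (hK : ∀ g, (∀ (u : H) (c : ℝ), (∀ k ∈ K, inner ℝ k u ≤ c) → inner ℝ g u ≤ c) → g ∈ K) :
    (K.extremePoints ℝ).Nonempty := by
  let e : H ≃ₗᵢ[ℝ] StrongDual ℝ H := by
    simpa using! InnerProductSpace.toDual ℝ H
  have he : ∀ g u, e g u = inner ℝ g u := fun g u => by rfl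
  let K' : Set (WeakDual ℝ H) := {φ | e.symm (WeakDual.toStrongDual φ) ∈ K}
  have hφ : ∀ (φ : WeakDual ℝ H) u, inner ℝ (e.symm (WeakDual.toStrongDual φ)) u = φ u := by
    intro φ u
    rw [← he]; simp
  have hKe : K' = ⋂ (u : H) (c : ℝ) (_ : ∀ k ∈ K, inner ℝ k u ≤ c), {φ : WeakDual ℝ H | φ u ≤ c} := by
    ext φ
    simp only [Set.mem_iInter]
    constructor
    · intro h u c hc
      have := hc _ h
      rwa [hφ] at this
    · intro h
      apply hK
      intro u c hc
      rw [hφ]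
      exact h u c hc
  have hcl : IsClosed K' := by
    rw [hKe]
    refine isClosed_iInter fun u => isClosed_iInter fun c => isClosed_iInter fun _ => ?_
    exact isClosed_le (WeakDual.eval_continuous u) continuous_const
  have hcomp : IsCompact K' := by
    refine (WeakDual.isCompact_closedBall (0 : StrongDual ℝ H) R).of_isClosed_subset hcl ?_
    intro φ h
    have := hR _ h
    simp only [LinearIsometryEquiv.norm_map] at this
    simpa using this
  have hne' : K'.Nonempty := by
    obtain ⟨g, hg⟩ := hne
    refine ⟨StrongDual.toWeakDual (e g), ?_⟩
    change e.symm (e g) ∈ K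
    simpa using hg
  have : LocallyConvexSpace ℝ (WeakDual ℝ H) :=
    inferInstanceAs (LocallyConvexSpace ℝ (WeakBilin (topDualPairing ℝ H)))
  obtain ⟨φ, hφK, hext⟩ := hcomp.extremePoints_nonempty hne'
  refine ⟨e.symm (WeakDual.toStrongDual φ), hφK, ?_⟩
  intro x hx y hy hxy
  obtain ⟨a, b, ha, hb, hab, h⟩ := hxy
  have hx' : StrongDual.toWeakDual (e x) ∈ K' := by
    change e.symm (e x) ∈ K
    simpa using hx
  have hy' : StrongDual.toWeakDual (e y) ∈ K' := by
    change e.symm (e y) ∈ K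
    simpa using hy
  have := hext hx' hy' ⟨a, b, ha, hb, hab, by
    have h2 := congrArg e h
    simp only [map_add, map_smul, LinearIsometryEquiv.apply_symm_apply] at h2
    have h3 := congrArg StrongDual.toWeakDual h2
    simpa using h3⟩
  rw [← this]
  simp

lemma M_meas {S X : Type*} [MeasurableSpace S] [TopologicalSpace X] [CompactSpace X] [Nonempty X]
    [TopologicalSpace.SeparableSpace X] (φ : S → X → ℝ) (h1 : ∀ x, Measurable fun s => φ s x)
    (h2 : ∀ s, Continuous (φ s)) (h0 : ∀ s x, 0 ≤ φ s x) : MeasurableSet {s | ∃ x, φ s x = 0} := by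
  have : {s | ∃ x, φ s x = 0} = ⋂ k : ℕ, ⋃ i : ℕ,
      {s | φ s (TopologicalSpace.denseSeq X i) < 1 / ((k : ℝ) + 1)} := by
    ext s
    simp only [Set.mem_ofPred_eq, Set.mem_iInter, Set.mem_iUnion]
    constructor
    · rintro ⟨x, hx⟩ k
      have ho : IsOpen {y | φ s y < 1 / ((k : ℝ) + 1)} := isOpen_lt (h2 s) continuous_const
      exact (TopologicalSpace.denseRange_denseSeq X).exists_mem_open ho
        ⟨x, by simp only [Set.mem_ofPred_eq, hx]; positivity⟩
    · intro h
      obtain ⟨x, -, hx⟩ := isCompact_univ.exists_isMinOn Set.univ_nonempty (h2 s).continuousOn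
      refine ⟨x, le_antisymm ?_ (h0 s x)⟩
      by_contra hc
      push Not at hc
      obtain ⟨k, hk⟩ := exists_nat_one_div_lt hc
      obtain ⟨i, hi⟩ := h k
      have := hx (Set.mem_univ (TopologicalSpace.denseSeq X i))
      simp only [Set.mem_ofPred_eq] at this
      linarith
  rw [this]
  exact MeasurableSet.iInter fun k => MeasurableSet.iUnion fun i =>
    measurableSet_lt (h1 _) measurable_const

lemma sel_cantor {S : Type*} [MeasurableSpace S] (φ : S → cantorSet → ℝ)
    (h1 : ∀ x, Measurable fun s => φ s x)
    (h2 : ∀ s, Continuous (φ s)) (h0 : ∀ s x, 0 ≤ φ s x) (hz : ∀ s, ∃ x, φ s x = 0) :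
    ∃ ξ : S → cantorSet, Measurable ξ ∧ ∀ s, φ s (ξ s) = 0 := by
  have : CompactSpace cantorSet := isCompact_iff_compactSpace.mp isCompact_cantorSet
  have hex : ∀ s, ∃ x, φ s x = 0 ∧ ∀ y, φ s y = 0 → (x : ℝ) ≤ y := by
    intro s
    have hc : IsCompact {x | φ s x = 0} := (isClosed_eq (h2 s) continuous_const).isCompact
    obtain ⟨x, hx, hm⟩ := hc.exists_isMinOn (hz s) (continuous_subtype_val.continuousOn)
    exact ⟨x, hx, fun y hy => hm hy⟩
  choose ξ hξ hmin using hex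
  refine ⟨ξ, ?_, hξ⟩
  refine Measurable.subtype_mk (f := fun s => (ξ s : ℝ)) ?_ (h := fun s => (ξ s).2)
  refine measurable_of_Iic fun t => ?_
  by_cases hne : Nonempty S
  swap
  · rw [not_nonempty_iff] at hne
    rw [Set.eq_empty_of_isEmpty ((fun s => (ξ s : ℝ)) ⁻¹' Set.Iic t)]
    exact MeasurableSet.empty
  have : Nonempty cantorSet := ⟨ξ hne.some⟩
  have := M_meas (fun s x => φ s x + max ((x : ℝ) - t) 0) (fun x => (h1 x).add_const _)
    (fun s => (h2 s).add (by fun_prop)) (fun s x => add_nonneg (h0 s x) (le_max_right _ _))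
  convert this using 1
  ext s
  simp only [Set.mem_preimage, Set.mem_Iic, Set.mem_ofPred_eq]
  constructor
  · intro h
    exact ⟨ξ s, by rw [hξ, max_eq_right (by linarith), add_zero]⟩
  · rintro ⟨x, hx⟩
    have h3 := h0 s x
    have h4 := le_max_right ((x : ℝ) - t) 0
    have h5 := le_max_left ((x : ℝ) - t) 0
    have := hmin s x (by linarith)
    linarith

lemma sel_compact {S X : Type*} [MeasurableSpace S] [MetricSpace X] [CompactSpace X]
    [MeasurableSpace X] [BorelSpace X] (φ : S → X → ℝ)
    (h1 : ∀ x, Measurable fun s => φ s x)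
    (h2 : ∀ s, Continuous (φ s)) (h0 : ∀ s x, 0 ≤ φ s x) (hz : ∀ s, ∃ x, φ s x = 0) :
    ∃ ξ : S → X, Measurable ξ ∧ ∀ s, φ s (ξ s) = 0 := by
  by_cases hne : Nonempty S
  swap
  · rw [not_nonempty_iff] at hne
    exact ⟨fun s => (hne.false s).elim, measurable_of_empty _, fun s => (hne.false s).elim⟩
  have : Nonempty X := ⟨(hz hne.some).choose⟩
  obtain ⟨f, hf, hs⟩ := exists_nat_bool_continuous_surjective_of_compact X
  let g : cantorSet → X := f ∘ cantorSetHomeomorphNatToBool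
  have hg : Continuous g := hf.comp cantorSetHomeomorphNatToBool.continuous
  have hgs : Function.Surjective g := hs.comp cantorSetHomeomorphNatToBool.surjective
  obtain ⟨ξ, hξ, hh⟩ := sel_cantor (fun s x => φ s (g x)) (fun x => h1 _) (fun s => (h2 s).comp hg)
    (fun s x => h0 _ _) (fun s => by
      obtain ⟨x, hx⟩ := hz s
      obtain ⟨y, rfl⟩ := hgs x
      exact ⟨y, hx⟩)
  exact ⟨fun s => g (ξ s), hg.measurable.comp hξ, hh⟩


lemma hull {S : Type*} (G : MeasurableSpace S) [mS : MeasurableSpace S] (ν : Measure S)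
    [IsFiniteMeasure ν] (hG : G ≤ mS) (E : Set S) (hE : MeasurableSet[mS] E) :
    ∃ B, MeasurableSet[G] B ∧ ν (E \ B) = 0 ∧
      ∀ Z, MeasurableSet[G] Z → ν (E ∩ Z) = 0 → ν (B ∩ Z) = 0 := by
  let p : S → ℝ := ν[E.indicator (fun _ => (1 : ℝ)) | G]
  have hIntg : Integrable (E.indicator (fun _ => (1 : ℝ))) ν := (integrable_const _).indicator hE
  have hp : StronglyMeasurable[G] p := stronglyMeasurable_condExp
  have hp0 : 0 ≤ᵐ[ν] p := condExp_nonneg (ae_of_all _ fun s => by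
    by_cases h : s ∈ E <;> simp [h])
  have hset : ∀ Z, MeasurableSet[G] Z → ∫ s in Z, p s ∂ν = ν.real (E ∩ Z) := by
    intro Z hZ
    rw [setIntegral_condExp hG hIntg hZ, integral_indicator hE, setIntegral_const, smul_eq_mul,
      mul_one, measureReal_restrict_apply hE]
  refine ⟨{s | 0 < p s}, ?_, ?_, ?_⟩
  · exact measurableSet_lt (@measurable_const _ _ _ G _) hp.measurable
  · have hZ : MeasurableSet[G] {s | 0 < p s}ᶜ :=
      (measurableSet_lt (@measurable_const _ _ _ G _) hp.measurable).compl
    have h1 := hset _ hZ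
    have h2 : ∫ s in {s | 0 < p s}ᶜ, p s ∂ν ≤ 0 :=
      setIntegral_nonpos (hG _ hZ) (fun s hs => not_lt.mp hs)
    have h3 : ν.real (E ∩ {s | 0 < p s}ᶜ) = 0 := le_antisymm (h1 ▸ h2) measureReal_nonneg
    rw [measureReal_eq_zero_iff] at h3
    rwa [Set.sdiff_eq]
  · intro Z hZ hEZ
    have h1 := hset Z hZ
    rw [measureReal_def, hEZ, ENNReal.toReal_zero,
      setIntegral_eq_zero_iff_of_nonneg_ae (ae_restrict_of_ae hp0) integrable_condExp.integrableOn] at h1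
    have h2 := (ae_restrict_iff' (hG _ hZ)).mp h1
    refine measure_mono_null ?_ h2
    intro s hs h
    have := h hs.2
    have h4 : 0 < p s := hs.1
    simp only [Pi.zero_apply] at this
    linarith

lemma exists_h {S ι : Type*} (G : MeasurableSpace S) [mS : MeasurableSpace S] (ν : Measure S)
    [IsFiniteMeasure ν] (hG : G ≤ mS)
    (HN : ∀ D, MeasurableSet[mS] D → ν D ≠ 0 → ∃ D₀ ⊆ D, MeasurableSet[mS] D₀ ∧
      ∀ D₁, MeasurableSet[G] D₁ → ν (symmDiff D₀ (D₁ ∩ D)) ≠ 0)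
    (f : ι → S → ℝ) (hf : ∀ i, Integrable (f i) ν) (t : Finset ι) :
    ∀ D, MeasurableSet[mS] D → ν D ≠ 0 → ∃ h : S → ℝ, Measurable[mS] h ∧ (∀ s, |h s| ≤ 1) ∧
      (∀ s, s ∉ D → h s = 0) ∧ ν {s | h s ≠ 0} ≠ 0 ∧
      ∀ i ∈ t, ν[fun s => h s * f i s | G] =ᵐ[ν] 0 := by
  classical
  induction t using Finset.induction_on with
  | empty =>
    intro D hD hD0
    refine ⟨D.indicator (fun _ => 1), measurable_const.indicator hD, ?_, ?_, ?_, by simp⟩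
    · intro s
      by_cases h : s ∈ D <;> simp [h]
    · intro s h
      simp [h]
    · convert hD0 using 2
      ext s
      simp
  | insert a t hat ih =>
    intro D hD hD0
    obtain ⟨D0, hD0D, hD0m, hsep⟩ := HN D hD hD0
    have hFm : MeasurableSet[mS] (D \ D0) := hD.diff hD0m
    obtain ⟨BE, hBE, hBE1, hBE2⟩ := hull G ν hG D0 hD0m
    obtain ⟨BF, hBF, hBF1, hBF2⟩ := hull G ν hG (D \ D0) hFm
    have hB : ν (BE ∩ BF) ≠ 0 := by
      intro h
      apply hsep BE hBE
      refine measure_mono_null (t := (D0 \ BE) ∪ ((D \ D0) \ BF) ∪ (BE ∩ BF)) ?_ ?_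
      · intro s hs
        simp only [Set.mem_symmDiff, Set.mem_inter_iff, Set.mem_union, Set.mem_sdiff] at hs ⊢
        have := @hD0D s
        tauto
      · simp [hBE1, hBF1, h]
    have hBm : MeasurableSet[G] (BE ∩ BF) := hBE.inter hBF
    have h0 : ν (D0 ∩ (BE ∩ BF)) ≠ 0 := by
      intro h
      have := hBE2 _ hBm h
      rw [← Set.inter_assoc, Set.inter_self] at this
      exact hB this
    obtain ⟨h1, h1m, h1b, h1s, h1n, h1z⟩ := ih _ (hD0m.inter (hG _ hBm)) h0
    have hEm : MeasurableSet[mS] {s | h1 s ≠ 0} := (measurableSet_eq_fun h1m measurable_const).compl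
    obtain ⟨H, hH, hH1, hH2⟩ := hull G ν hG {s | h1 s ≠ 0} hEm
    have hHB : ν (BF ∩ (H ∩ (BE ∩ BF))) ≠ 0 := by
      intro h
      apply h1n
      refine measure_mono_null (t := ({s | h1 s ≠ 0} \ H) ∪ (BF ∩ (H ∩ (BE ∩ BF)))) ?_ ?_
      · intro s hs
        have : s ∈ D0 ∩ (BE ∩ BF) := by
          by_contra hc
          exact hs (h1s s hc)
        simp only [Set.mem_inter_iff, Set.mem_union, Set.mem_sdiff] at this ⊢
        tauto
      · simp [hH1, h]
    have hF0 : ν ((D \ D0) ∩ (H ∩ (BE ∩ BF))) ≠ 0 := fun h => hHB (hBF2 _ (hH.inter hBm) h)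
    obtain ⟨h2, h2m, h2b, h2s, h2n, h2z⟩ := ih _ (hFm.inter (hG _ (hH.inter hBm))) hF0
    have hi1 : ∀ i, Integrable (fun s => h1 s * f i s) ν := fun i =>
      (hf i).bdd_mul (c := 1) h1m.aestronglyMeasurable (ae_of_all _ h1b)
    have hi2 : ∀ i, Integrable (fun s => h2 s * f i s) ν := fun i =>
      (hf i).bdd_mul (c := 1) h2m.aestronglyMeasurable (ae_of_all _ h2b)
    set a1 : S → ℝ := ν[fun s => h1 s * f a s | G] with ha1
    set a2 : S → ℝ := ν[fun s => h2 s * f a s | G] with ha2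
    have a1m : StronglyMeasurable[G] a1 := stronglyMeasurable_condExp
    have a2m : StronglyMeasurable[G] a2 := stronglyMeasurable_condExp
    have pull : ∀ (c g : S → ℝ), StronglyMeasurable[G] c → (∀ s, |c s| ≤ 1) → Integrable g ν →
        ν[fun s => c s * g s | G] =ᵐ[ν] fun s => c s * (ν[g | G]) s := by
      intro c g hc hcb hg
      exact condExp_stronglyMeasurable_mul_of_bound hG hc hg 1 (ae_of_all _ hcb)
    let w : S → ℝ := fun s => (1 + |a1 s| + |a2 s|)⁻¹
    have a1m' := a1m.measurable
    have a2m' := a2m.measurable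
    have wm : Measurable[G] w := by
      have h1 : Measurable[G] fun s => |a1 s| := continuous_abs.measurable.comp a1m'
      have h2 : Measurable[G] fun s => |a2 s| := continuous_abs.measurable.comp a2m'
      exact ((h1.const_add 1).add h2).inv
    have wpos : ∀ s, 0 < w s := fun s => by positivity
    have c1m : StronglyMeasurable[G] (fun s => w s * a2 s) := (wm.mul a2m').stronglyMeasurable
    have c2m : StronglyMeasurable[G] (fun s => w s * a1 s) := (wm.mul a1m').stronglyMeasurable
    have c1b : ∀ s, |w s * a2 s| ≤ 1 := fun s => by
      rw [abs_mul, abs_of_pos (wpos s), inv_mul_le_one₀ (by positivity)]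
      linarith [abs_nonneg (a1 s)]
    have c2b : ∀ s, |w s * a1 s| ≤ 1 := fun s => by
      rw [abs_mul, abs_of_pos (wpos s), inv_mul_le_one₀ (by positivity)]
      linarith [abs_nonneg (a2 s)]
    have hdisj : ∀ s, h1 s = 0 ∨ h2 s = 0 := by
      intro s
      by_cases hs : s ∈ D0
      · right; apply h2s; simp [hs]
      · left; apply h1s; simp [hs]
    let h : S → ℝ := fun s => w s * a2 s * h1 s - w s * a1 s * h2 s
    by_cases hh : ν {s | h s ≠ 0} = 0
    ·
      let Z : Set S := {s | a2 s ≠ 0}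
      have hZ : MeasurableSet[G] Z := a2m' (measurableSet_singleton (0 : ℝ)).compl
      let c : S → ℝ := Zᶜ.indicator (fun _ => 1)
      have cm : StronglyMeasurable[G] c := (@stronglyMeasurable_const _ _ G _ _).indicator hZ.compl
      have cb : ∀ s, |c s| ≤ 1 := by
        intro s
        by_cases h : s ∈ Zᶜ
        · simp only [c, Set.indicator_of_mem h]; simp
        · simp only [c, Set.indicator_of_notMem h]; simp
      have h1Z : ν ({s | h1 s ≠ 0} ∩ Z) = 0 := by
        refine measure_mono_null ?_ hh
        rintro s ⟨hs1, hs2⟩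
        have h20 := (hdisj s).resolve_left hs1
        simp only [h, Set.mem_ofPred_eq, h20, mul_zero, sub_zero]
        exact mul_ne_zero (mul_ne_zero (wpos s).ne' hs2) hs1
      have hHZ := hH2 Z hZ h1Z
      refine ⟨fun s => c s * h2 s, (cm.measurable.mono hG le_rfl).mul h2m, ?_, ?_, ?_, ?_⟩
      · intro s
        rw [abs_mul]
        exact mul_le_one₀ (cb s) (abs_nonneg _) (h2b s)
      · intro s hs
        change c s * h2 s = 0
        rw [h2s s (by simp [hs]), mul_zero]
      · intro h0
        apply h2n
        refine measure_mono_null (t := {s | c s * h2 s ≠ 0} ∪ (H ∩ Z)) ?_ (measure_union_null h0 hHZ)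
        intro s hs
        have hsH : s ∈ (D \ D0) ∩ (H ∩ (BE ∩ BF)) := by
          by_contra hc
          exact hs (h2s s hc)
        by_cases hz : s ∈ Z
        · exact Or.inr ⟨hsH.2.1, hz⟩
        · left
          have : c s = 1 := Set.indicator_of_mem (s := Zᶜ) hz _
          simpa [this] using hs
      · intro i hi
        have hp := pull c (fun s => h2 s * f i s) cm cb (hi2 i)
        simp only [mul_assoc]
        rcases Finset.mem_insert.mp hi with rfl | hi
        · filter_upwards [hp] with s hs
          rw [hs]
          by_cases hz : s ∈ Z
          · have : c s = 0 := Set.indicator_of_notMem (s := Zᶜ) (by simpa using hz) _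
            simp [this]
          · have : a2 s = 0 := by simpa [Z] using hz
            rw [← ha2, this]; simp
        · filter_upwards [hp, h2z i hi] with s hs hs2
          rw [hs, hs2]; simp
    · refine ⟨h, ?_, ?_, ?_, hh, ?_⟩
      · exact ((c1m.measurable.mono hG le_rfl).mul h1m).sub ((c2m.measurable.mono hG le_rfl).mul h2m)
      · intro s
        rcases hdisj s with h0 | h0
        · simp only [h, h0, mul_zero, zero_sub, abs_neg]
          rw [abs_mul]
          exact mul_le_one₀ (c2b s) (abs_nonneg _) (h2b s)
        · simp only [h, h0, mul_zero, sub_zero]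
          rw [abs_mul]
          exact mul_le_one₀ (c1b s) (abs_nonneg _) (h1b s)
      · intro s hs
        have e1 : h1 s = 0 := h1s s (fun h => hs (hD0D h.1))
        have e2 : h2 s = 0 := h2s s (fun h => hs h.1.1)
        simp [h, e1, e2]
      · intro i hi
        have hp1 := pull _ (fun s => h1 s * f i s) c1m c1b (hi1 i)
        have hp2 := pull _ (fun s => h2 s * f i s) c2m c2b (hi2 i)
        have hI1 : Integrable (fun s => w s * a2 s * (h1 s * f i s)) ν :=
          (hi1 i).bdd_mul (c := 1) (c1m.mono hG).aestronglyMeasurable (ae_of_all _ c1b)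
        have hI2 : Integrable (fun s => w s * a1 s * (h2 s * f i s)) ν :=
          (hi2 i).bdd_mul (c := 1) (c2m.mono hG).aestronglyMeasurable (ae_of_all _ c2b)
        have hs := condExp_sub hI1 hI2 G
        have heq : (fun s => h s * f i s) = (fun s => w s * a2 s * (h1 s * f i s)) -
            (fun s => w s * a1 s * (h2 s * f i s)) := by
          ext s; simp only [h, Pi.sub_apply]; ring
        rw [heq]
        rcases Finset.mem_insert.mp hi with rfl | hi
        · filter_upwards [hp1, hp2, hs] with s e1 e2 e3
          rw [e3, Pi.sub_apply, e1, e2, ← ha1, ← ha2]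
          simp only [Pi.zero_apply]; ring
        · filter_upwards [hp1, hp2, hs, h1z i hi, h2z i hi] with s e1 e2 e3 e4 e5
          rw [e3, Pi.sub_apply, e1, e2, e4, e5]; simp


lemma binary {S ι : Type*} [Fintype ι] (G : MeasurableSpace S) [mS : MeasurableSpace S]
    (ν : Measure S) [IsFiniteMeasure ν] (hG : G ≤ mS)
    (HN : ∀ D, MeasurableSet[mS] D → ν D ≠ 0 → ∃ D₀ ⊆ D, MeasurableSet[mS] D₀ ∧
      ∀ D₁, MeasurableSet[G] D₁ → ν (symmDiff D₀ (D₁ ∩ D)) ≠ 0)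
    (f : ι → S → ℝ) (hf : ∀ i, Measurable[mS] (f i)) (R : ℝ) (hR : ∀ i s, |f i s| ≤ R)
    (α : S → ℝ) (hα : Measurable[mS] α) (hα0 : ∀ s, 0 ≤ α s) (hα1 : ∀ s, α s ≤ 1) :
    ∃ A, MeasurableSet[mS] A ∧ ∀ i B, MeasurableSet[G] B →
      ∫ s in B, A.indicator (f i) s ∂ν = ∫ s in B, α s * f i s ∂ν := by
  have hfL : ∀ i (p : ENNReal), MemLp (f i) p ν := fun i p =>
    MemLp.of_bound (hf i).aestronglyMeasurable R (ae_of_all _ (hR i))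
  have hfi : ∀ i, Integrable (f i) ν := fun i => memLp_one_iff_integrable.mp (hfL i 1)
  have hFL : ∀ i B, MeasurableSet[mS] B → MemLp (B.indicator (f i)) 2 ν := fun i B hB =>
    (hfL i 2).indicator hB
  let K : Set (Lp ℝ 2 ν) := {g | (∀ᵐ s ∂ν, 0 ≤ g s) ∧ (∀ᵐ s ∂ν, g s ≤ 1) ∧
    ∀ i B, MeasurableSet[G] B → ∫ s in B, g s * f i s ∂ν = ∫ s in B, α s * f i s ∂ν}
  have hmemK : ∀ (g : S → ℝ) (hg : MemLp g 2 ν), (∀ᵐ s ∂ν, 0 ≤ g s) → (∀ᵐ s ∂ν, g s ≤ 1) →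
      (∀ i B, MeasurableSet[G] B → ∫ s in B, g s * f i s ∂ν = ∫ s in B, α s * f i s ∂ν) →
      hg.toLp g ∈ K := by
    intro g hg h1 h2 h3
    have he := hg.coeFn_toLp
    refine ⟨?_, ?_, ?_⟩
    · filter_upwards [h1, he] with s a b
      rw [b]; exact a
    · filter_upwards [h2, he] with s a b
      rw [b]; exact a
    · intro i B hB
      rw [← h3 i B hB]
      apply integral_congr_ae
      filter_upwards [ae_restrict_of_ae he] with s hs
      rw [hs]
  have hαL : MemLp α 2 ν := MemLp.of_bound hα.aestronglyMeasurable 1 (ae_of_all _ fun s => by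
    rw [Real.norm_eq_abs, abs_of_nonneg (hα0 s)]; exact hα1 s)
  have hne : K.Nonempty := ⟨_, hmemK α hαL (ae_of_all _ hα0) (ae_of_all _ hα1) (fun _ _ _ => rfl)⟩
  have hinner : ∀ (g : Lp ℝ 2 ν) i B (hB : MeasurableSet[mS] B),
      inner ℝ g ((hFL i B hB).toLp) = ∫ s in B, g s * f i s ∂ν := by
    intro g i B hB
    rw [L2.inner_def, ← integral_indicator hB]
    apply integral_congr_ae
    filter_upwards [(hFL i B hB).coeFn_toLp] with s hs
    rw [hs]
    by_cases h : s ∈ B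
    · simp [h, mul_comm]
    · simp [h]
  have hinner1 : ∀ (g : Lp ℝ 2 ν) B (hB : MeasurableSet[mS] B),
      inner ℝ g (indicatorConstLp 2 hB (measure_ne_top ν B) (1 : ℝ)) = ∫ s in B, g s ∂ν := by
    intro g B hB
    rw [real_inner_comm, L2.inner_indicatorConstLp_one]
  have hgi : ∀ g : Lp ℝ 2 ν, Integrable g ν := fun g => (Lp.memLp g).integrable (by norm_num)
  obtain ⟨g, hgK, hext⟩ := hilbert_ext K hne ((ν Set.univ).toReal ^ ((2 : ENNReal).toReal⁻¹) * 1) (by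
    intro g hg
    have := Lp.norm_le_of_ae_bound (f := g) (C := 1) zero_le_one (by
      filter_upwards [hg.1, hg.2.1] with s a b
      rw [Real.norm_eq_abs, abs_of_nonneg a]; exact b)
    simpa [measureUnivNNReal, ENNReal.coe_toNNReal_eq_toReal] using this) (by
    intro g hg
    refine ⟨?_, ?_, ?_⟩
    · refine ae_nonneg_of_forall_setIntegral_nonneg (hgi g) ?_
      intro B hB _
      have := hg (-indicatorConstLp 2 hB (measure_ne_top ν B) (1 : ℝ)) 0 (by
        intro k hk
        rw [inner_neg_right, hinner1]
        have : 0 ≤ ∫ s in B, k s ∂ν := integral_nonneg_of_ae (ae_restrict_of_ae hk.1)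
        linarith)
      rw [inner_neg_right, hinner1] at this
      linarith
    · have : 0 ≤ᵐ[ν] fun s => 1 - g s := by
        refine ae_nonneg_of_forall_setIntegral_nonneg ((integrable_const 1).sub (hgi g)) ?_
        intro B hB _
        have := hg (indicatorConstLp 2 hB (measure_ne_top ν B) (1 : ℝ)) (∫ s in B, (1 : ℝ) ∂ν) (by
          intro k hk
          rw [hinner1]
          exact integral_mono_ae (hgi k).integrableOn (integrable_const _) (ae_restrict_of_ae hk.2.1))
        rw [hinner1] at this
        rw [integral_sub (integrable_const _) (hgi g).integrableOn]
        linarith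
      filter_upwards [this] with s hs
      simp only [Pi.zero_apply] at hs
      linarith
    · intro i B hB
      have hB' := hG _ hB
      apply le_antisymm
      · have := hg ((hFL i B hB').toLp) (∫ s in B, α s * f i s ∂ν) (by
          intro k hk
          rw [hinner _ _ _ hB', hk.2.2 i B hB])
        rwa [hinner _ _ _ hB'] at this
      · have := hg (-(hFL i B hB').toLp) (-∫ s in B, α s * f i s ∂ν) (by
          intro k hk
          rw [inner_neg_right, hinner _ _ _ hB', hk.2.2 i B hB])
        rw [inner_neg_right, hinner _ _ _ hB'] at this
        linarith)
  have hgm : Measurable[mS] g := (Lp.stronglyMeasurable g).measurable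
  have key : ∀ n : ℕ, ν {s | 1 / ((n : ℝ) + 1) ≤ g s ∧ g s ≤ 1 - 1 / ((n : ℝ) + 1)} = 0 := by
    intro n
    by_contra hD
    set ε : ℝ := 1 / ((n : ℝ) + 1) with hε
    have hε0 : 0 < ε := by positivity
    have hDm : MeasurableSet[mS] {s | ε ≤ g s ∧ g s ≤ 1 - ε} :=
      (measurableSet_le measurable_const hgm).inter (measurableSet_le hgm measurable_const)
    obtain ⟨h, hm, hb, hs, hn, hz⟩ := exists_h G ν hG HN f hfi Finset.univ _ hDm hD
    have hhL : MemLp h 2 ν := MemLp.of_bound hm.aestronglyMeasurable 1 (ae_of_all _ hb)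
    have hhf : ∀ i, Integrable (fun s => h s * f i s) ν := fun i =>
      (hfi i).bdd_mul (c := 1) hm.aestronglyMeasurable (ae_of_all _ hb)
    have hgf : ∀ i, Integrable (fun s => g s * f i s) ν := fun i =>
      (hgi g).mul_bdd (c := R) (hf i).aestronglyMeasurable (ae_of_all _ (hR i))
    have hz' : ∀ i B, MeasurableSet[G] B → ∫ s in B, h s * f i s ∂ν = 0 := by
      intro i B hB
      rw [← setIntegral_condExp hG (hhf i) hB,
        integral_congr_ae (ae_restrict_of_ae (hz i (Finset.mem_univ i)))]
      simp
    have hpm : ∀ c : ℝ, |c| = ε → ((Lp.memLp g).add (hhL.const_mul c)).toLp ∈ K := by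
      intro c hc
      have hch : ∀ s, |c * h s| ≤ ε := by
        intro s
        rw [abs_mul, hc]
        exact mul_le_of_le_one_right hε0.le (hb s)
      apply hmemK
      · filter_upwards [hgK.1] with s h0
        simp only [Pi.add_apply]
        by_cases hD : s ∈ {s | ε ≤ g s ∧ g s ≤ 1 - ε}
        · have := abs_le.mp (hch s)
          linarith [hD.1]
        · simp [hs s hD, h0]
      · filter_upwards [hgK.2.1] with s h0
        simp only [Pi.add_apply]
        by_cases hD : s ∈ {s | ε ≤ g s ∧ g s ≤ 1 - ε}
        · have := abs_le.mp (hch s)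
          linarith [hD.2]
        · simp [hs s hD, h0]
      · intro i B hB
        rw [← hgK.2.2 i B hB]
        have : ∀ s, ((g : S → ℝ) + fun x => c * h x) s * f i s = g s * f i s + c * (h s * f i s) := by
          intro s; simp only [Pi.add_apply]; ring
        simp only [this]
        rw [integral_add (hgf i).integrableOn ((hhf i).const_mul c).integrableOn,
          integral_const_mul, hz' i B hB]
        simp
    have hp := hpm ε (abs_of_pos hε0)
    have hq := hpm (-ε) (by rw [abs_neg, abs_of_pos hε0])
    have heq := hext hp hq ⟨1/2, 1/2, by norm_num, by norm_num, by norm_num, by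
      rw [← MemLp.toLp_const_smul, ← MemLp.toLp_const_smul, ← MemLp.toLp_add]
      conv_rhs => rw [← Lp.toLp_coeFn g (Lp.memLp g)]
      apply MemLp.toLp_congr
      refine ae_of_all _ fun s => ?_
      simp only [Pi.add_apply, Pi.smul_apply, smul_eq_mul]
      ring⟩
    apply hn
    have h1 := ((Lp.memLp g).add (hhL.const_mul ε)).coeFn_toLp
    rw [heq] at h1
    have : ∀ᵐ s ∂ν, h s = 0 := by
      filter_upwards [h1] with s h1
      simp only [Pi.add_apply] at h1
      have : ε * h s = 0 := by linarith
      exact (mul_eq_zero.mp this).resolve_left hε0.ne'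
    exact this
  have h01 : ∀ᵐ s ∂ν, g s = 0 ∨ g s = 1 := by
    have : ∀ᵐ s ∂ν, ∀ n : ℕ, ¬ (1 / ((n : ℝ) + 1) ≤ g s ∧ g s ≤ 1 - 1 / ((n : ℝ) + 1)) := by
      rw [ae_all_iff]
      intro n
      rw [ae_iff]
      simpa only [not_not] using key n
    filter_upwards [this, hgK.1, hgK.2.1] with s h h0 h1
    by_contra hc
    push Not at hc
    have p0 : 0 < g s := lt_of_le_of_ne h0 (Ne.symm hc.1)
    have p1 : 0 < 1 - g s := by
      have := lt_of_le_of_ne h1 hc.2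
      linarith
    obtain ⟨n, hn⟩ := exists_nat_one_div_lt (lt_min p0 p1)
    have a := hn.trans_le (min_le_left _ _)
    have b := hn.trans_le (min_le_right _ _)
    exact h n ⟨a.le, by linarith⟩
  refine ⟨{s | g s = 1}, hgm (measurableSet_singleton (1 : ℝ)), ?_⟩
  intro i B hB
  rw [← hgK.2.2 i B hB]
  apply integral_congr_ae
  filter_upwards [ae_restrict_of_ae h01] with s hs
  rcases hs with h | h <;> simp [Set.indicator, h]

lemma npoint {S ι : Type*} [Fintype ι] (G : MeasurableSpace S) [mS : MeasurableSpace S]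
    (ν : Measure S) [IsFiniteMeasure ν] (hG : G ≤ mS)
    (HN : ∀ D, MeasurableSet[mS] D → ν D ≠ 0 → ∃ D₀ ⊆ D, MeasurableSet[mS] D₀ ∧
      ∀ D₁, MeasurableSet[G] D₁ → ν (symmDiff D₀ (D₁ ∩ D)) ≠ 0) (n : ℕ) :
    ∀ (f : Fin (n + 1) → ι → S → ℝ) (_ : ∀ l i, Measurable[mS] (f l i)) (R : ℝ)
    (_ : ∀ l i s, |f l i s| ≤ R)
    (α : Fin (n + 1) → S → ℝ) (_ : ∀ l, Measurable[mS] (α l)) (_ : ∀ l s, 0 ≤ α l s)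
    (_ : ∀ s, ∑ l, α l s = 1),
    ∃ σ : S → Fin (n + 1), Measurable[mS] σ ∧ ∀ i B, MeasurableSet[G] B →
      ∫ s in B, f (σ s) i s ∂ν = ∫ s in B, ∑ l, α l s * f l i s ∂ν := by
  induction n with
  | zero =>
    intro f hf R hR α hα hα0 hα1
    refine ⟨fun _ => 0, measurable_const, ?_⟩
    intro i B hB
    congr 1
    ext s
    have := hα1 s
    simp at this
    simp [this]
  | succ n ih =>
    intro f hf R hR α hα hα0 hα1
    have hα1' : ∀ l s, α l s ≤ 1 := fun l s => by
      rw [← hα1 s]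
      exact Finset.single_le_sum (f := fun l => α l s) (fun l _ => hα0 l s) (Finset.mem_univ l)
    have hsum : ∀ s, ∑ l : Fin (n + 1), α l.succ s = 1 - α 0 s := by
      intro s
      have := hα1 s
      rw [Fin.sum_univ_succ] at this
      linarith
    let β : Fin (n + 1) → S → ℝ := fun l s =>
      if α 0 s = 1 then (if l = 0 then 1 else 0) else α l.succ s / (1 - α 0 s)
    have hm1 : MeasurableSet[mS] {s | α 0 s = 1} := hα 0 (measurableSet_singleton (1 : ℝ))
    have hβm : ∀ l, Measurable[mS] (β l) := fun l =>
      Measurable.ite hm1 measurable_const ((hα l.succ).div (measurable_const.sub (hα 0)))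
    have hβ0 : ∀ l s, 0 ≤ β l s := by
      intro l s
      have h1 := hα1' 0 s
      have h2 := hα0 l.succ s
      simp only [β]
      split_ifs
      · exact zero_le_one
      · exact le_rfl
      · exact div_nonneg h2 (by linarith)
    have hβ1 : ∀ s, ∑ l, β l s = 1 := by
      intro s
      by_cases h : α 0 s = 1
      · simp [β, h]
      · simp only [β, h, if_false]
        rw [← Finset.sum_div, hsum, div_self]
        intro h'
        apply h
        linarith
    have hβα : ∀ l s, (1 - α 0 s) * β l s = α l.succ s := by
      intro l s
      by_cases h : α 0 s = 1
      · have h0 := hsum s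
        rw [h, sub_self, Finset.sum_eq_zero_iff_of_nonneg (fun l _ => hα0 _ s)] at h0
        rw [h, h0 l (Finset.mem_univ l)]
        simp
      · simp only [β, h, if_false]
        rw [mul_div_cancel₀]
        intro h'
        apply h
        linarith
    obtain ⟨τ, hτ, hτe⟩ := ih (fun l i s => (1 - α 0 s) * f l.succ i s)
      (fun l i => (measurable_const.sub (hα 0)).mul (hf _ _)) R (by
        intro l i s
        rw [abs_mul, abs_of_nonneg (by linarith [hα1' 0 s])]
        refine le_trans ?_ (hR l.succ i s)
        exact mul_le_of_le_one_left (abs_nonneg _) (by linarith [hα0 0 s])) β hβm hβ0 hβ1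
    have hfτ : ∀ i, Measurable[mS] fun s => f (τ s).succ i s := fun i => by
      have : Measurable (Function.uncurry fun (l : Fin (n + 1)) s => f l.succ i s) :=
        measurable_from_prod_countable_right fun (l : Fin (n + 1)) => hf l.succ i
      exact this.comp (hτ.prodMk measurable_id)
    obtain ⟨A, hA, hAe⟩ := binary G ν hG HN (fun i s => f 0 i s - f (τ s).succ i s)
      (fun i => (hf 0 i).sub (hfτ i)) (R + R) (by
        intro i s
        exact (abs_sub _ _).trans (add_le_add (hR _ _ _) (hR _ _ _))) (α 0) (hα 0) (hα0 0) (hα1' 0)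
    classical
    refine ⟨fun s => if s ∈ A then 0 else (τ s).succ, Measurable.ite hA measurable_const
      ((measurable_of_finite Fin.succ).comp hτ), ?_⟩
    intro i B hB
    have bi : ∀ (q : S → ℝ) (c : ℝ), Measurable[mS] q → (∀ s, |q s| ≤ c) → Integrable q (ν.restrict B) :=
      fun q c hq hc => memLp_one_iff_integrable.mp
        (MemLp.of_bound hq.aestronglyMeasurable c (ae_of_all _ hc))
    have hfi : ∀ l, Integrable (f l i) (ν.restrict B) := fun l => bi _ R (hf l i) (hR l i)
    have hfτi : Integrable (fun s => f (τ s).succ i s) (ν.restrict B) :=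
      bi _ R (hfτ i) (fun s => hR _ _ _)
    have hmulα : ∀ q : S → ℝ, Integrable q (ν.restrict B) → ∀ l,
        Integrable (fun s => α l s * q s) (ν.restrict B) := fun q hq l =>
      hq.bdd_mul (c := 1) (hα l).aestronglyMeasurable (ae_of_all _ fun s => by
        rw [Real.norm_eq_abs, abs_of_nonneg (hα0 l s)]; exact hα1' l s)
    have e1 : ∀ s, f (if s ∈ A then 0 else (τ s).succ) i s =
        f (τ s).succ i s + A.indicator (fun s => f 0 i s - f (τ s).succ i s) s := by
      intro s
      by_cases h : s ∈ A <;> simp [h]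
    have e2 : ∀ s, ∑ l, α l s * f l i s = α 0 s * f 0 i s +
        ∑ l : Fin (n + 1), β l s * ((1 - α 0 s) * f l.succ i s) := by
      intro s
      rw [Fin.sum_univ_succ]
      congr 1
      refine Finset.sum_congr rfl fun l _ => ?_
      rw [← hβα]; ring
    simp only [e1, e2]
    have hsumi : Integrable (fun s => ∑ l : Fin (n + 1), β l s * ((1 - α 0 s) * f l.succ i s))
        (ν.restrict B) := by
      refine integrable_finsetSum _ fun l _ => ?_
      have : (fun s => β l s * ((1 - α 0 s) * f l.succ i s)) = fun s => α l.succ s * f l.succ i s := by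
        ext s; rw [← hβα]; ring
      rw [this]
      exact hmulα _ (hfi _) _
    have hind : Integrable (A.indicator (fun s => f 0 i s - f (τ s).succ i s)) (ν.restrict B) :=
      ((hfi 0).sub hfτi).indicator hA
    rw [integral_add hfτi hind, hAe i B hB,
      integral_add (hmulα _ (hfi 0) 0) hsumi, ← hτe i B hB]
    have e3 : ∀ s, α 0 s * (f 0 i s - f (τ s).succ i s) = α 0 s * f 0 i s - α 0 s * f (τ s).succ i s :=
      fun s => by ring
    have e4 : ∀ s, (1 - α 0 s) * f (τ s).succ i s = f (τ s).succ i s - α 0 s * f (τ s).succ i s :=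
      fun s => by ring
    simp only [e3, e4]
    rw [integral_sub (hmulα _ (hfi 0) 0) (hmulα _ hfτi 0), integral_sub hfτi (hmulα _ hfτi 0)]
    ring


lemma caratheodory_meas {m : ℕ} {S : Type*} [mS : MeasurableSpace S]
    (P : S → Set (EuclideanSpace ℝ (Fin m)))
    (hP_meas : ∀ U : Set (EuclideanSpace ℝ (Fin m)), IsOpen U →
      MeasurableSet[mS] {s | (P s ∩ U).Nonempty})
    (hP_closed : ∀ s, IsClosed (P s))
    (C : ℝ) (hP_bd : ∀ s, ∀ y ∈ P s, ‖y‖ ≤ C)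
    (v' : S → EuclideanSpace ℝ (Fin m)) (hv'_meas : Measurable[mS] v')
    (hv'_sel : ∀ s, v' s ∈ convexHull ℝ (P s)) :
    ∃ (α : Fin (m + 1) → S → ℝ) (x : Fin (m + 1) → S → EuclideanSpace ℝ (Fin m)),
      (∀ l, Measurable[mS] (α l)) ∧ (∀ l, Measurable[mS] (x l)) ∧ (∀ l s, 0 ≤ α l s) ∧
      (∀ s, ∑ l, α l s = 1) ∧ (∀ l s, x l s ∈ P s) ∧ ∀ s, ∑ l, α l s • x l s = v' s := by
  have hne : ∀ s, (P s).Nonempty := fun s => convexHull_nonempty_iff.mp ⟨_, hv'_sel s⟩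
  have : CompactSpace (stdSimplex ℝ (Fin (m + 1))) :=
    isCompact_iff_compactSpace.mp (isCompact_stdSimplex ℝ (Fin (m + 1)))
  have : CompactSpace (Metric.closedBall (0 : EuclideanSpace ℝ (Fin m)) C) :=
    isCompact_iff_compactSpace.mp (isCompact_closedBall _ _)
  let X := stdSimplex ℝ (Fin (m + 1)) ×
    (Fin (m + 1) → Metric.closedBall (0 : EuclideanSpace ℝ (Fin m)) C)
  let φ : S → X → ℝ := fun s p => ∑ l, Metric.infDist (p.2 l : EuclideanSpace ℝ (Fin m)) (P s) +
    ‖∑ l, (p.1 : Fin (m + 1) → ℝ) l • (p.2 l : EuclideanSpace ℝ (Fin m)) - v' s‖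
  have hdist : ∀ y : EuclideanSpace ℝ (Fin m), Measurable fun s => Metric.infDist y (P s) := by
    intro y
    refine measurable_of_Iio fun r => ?_
    convert hP_meas (Metric.ball y r) Metric.isOpen_ball using 1
    ext s
    simp only [Set.mem_preimage, Set.mem_Iio, Set.mem_ofPred_eq]
    rw [Metric.infDist_lt_iff (hne s)]
    constructor
    · rintro ⟨z, hz, h⟩
      exact ⟨z, hz, by rwa [Metric.mem_ball, dist_comm]⟩
    · rintro ⟨z, hz, h⟩
      exact ⟨z, hz, by rwa [Metric.mem_ball, dist_comm] at h⟩
  have hφm : ∀ p : X, Measurable fun s => φ s p := by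
    intro p
    refine Measurable.add (Finset.measurable_sum _ fun l _ => ?_) ?_
    · exact hdist ((p.2 l : Metric.closedBall (0 : EuclideanSpace ℝ (Fin m)) C) : EuclideanSpace ℝ (Fin m))
    · exact (measurable_const.sub hv'_meas).norm
  have hcont : ∀ l : Fin (m + 1), Continuous fun p : X => (p.2 l : EuclideanSpace ℝ (Fin m)) :=
    fun l => continuous_subtype_val.comp ((continuous_apply l).comp continuous_snd)
  obtain ⟨ξ, hξ, hξ0⟩ := sel_compact φ
    (fun p => hφm p)
    (fun s => by
      refine Continuous.add (continuous_finsetSum _ fun l _ => ?_) ?_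
      · exact (Metric.continuous_infDist_pt _).comp (hcont l)
      · refine (Continuous.sub (continuous_finsetSum _ fun l _ => ?_) continuous_const).norm
        have hc1 : Continuous fun p : X => (p.1 : Fin (m + 1) → ℝ) l :=
          (continuous_apply l).comp (continuous_subtype_val.comp continuous_fst)
        exact hc1.smul (hcont l))
    (fun s p => add_nonneg (Finset.sum_nonneg fun l _ => Metric.infDist_nonneg) (norm_nonneg _))
    (fun s => by
      obtain ⟨ι, _, z, w, hz, haff, hw0, hw1, hwz⟩ := eq_pos_convex_span_of_mem_convexHull (hv'_sel s)
      have hcard : Fintype.card ι ≤ Fintype.card (Fin (m + 1)) := by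
        have := haff.card_le_finrank_succ
        have h2 := Submodule.finrank_le (vectorSpan ℝ (Set.range z))
        simp only [finrank_euclideanSpace, Fintype.card_fin] at h2 ⊢
        omega
      obtain ⟨e⟩ := Function.Embedding.nonempty_of_card_le hcard
      obtain ⟨z0, hz0⟩ := hne s
      let w' : Fin (m + 1) → ℝ := Function.extend e w 0
      let z' : Fin (m + 1) → EuclideanSpace ℝ (Fin m) := Function.extend e z (fun _ => z0)
      have hw'e : ∀ i, w' (e i) = w i := fun i => e.injective.extend_apply _ _ _
      have hz'e : ∀ i, z' (e i) = z i := fun i => e.injective.extend_apply _ _ _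
      have hw'n : ∀ l, l ∉ Set.range e → w' l = 0 := fun l hl =>
        Function.extend_apply' _ _ _ (by simpa using hl)
      have hz'n : ∀ l, l ∉ Set.range e → z' l = z0 := fun l hl =>
        Function.extend_apply' _ _ _ (by simpa using hl)
      have hz'P : ∀ l, z' l ∈ P s := by
        intro l
        by_cases hl : l ∈ Set.range e
        · obtain ⟨i, rfl⟩ := hl
          rw [hz'e]; exact hz ⟨i, rfl⟩
        · rw [hz'n l hl]; exact hz0
      have hw'0 : ∀ l, 0 ≤ w' l := by
        intro l
        by_cases hl : l ∈ Set.range e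
        · obtain ⟨i, rfl⟩ := hl
          rw [hw'e]; exact (hw0 i).le
        · rw [hw'n l hl]
      have hw'1 : ∑ l, w' l = 1 := by
        rw [← hw1]
        exact (Fintype.sum_of_injective e e.injective _ _ hw'n (fun i => (hw'e i).symm)).symm
      have hwz' : ∑ l, w' l • z' l = v' s := by
        rw [← hwz]
        refine (Fintype.sum_of_injective e e.injective _ _ (fun l hl => ?_) (fun i => ?_)).symm
        · rw [hw'n l hl, zero_smul]
        · rw [hw'e, hz'e]
      refine ⟨⟨⟨w', hw'0, hw'1⟩, fun l => ⟨z' l, by simpa using hP_bd s _ (hz'P l)⟩⟩, ?_⟩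
      change ∑ l, Metric.infDist (z' l) (P s) + ‖∑ l, w' l • z' l - v' s‖ = 0
      rw [hwz', sub_self, norm_zero, add_zero]
      exact Finset.sum_eq_zero fun l _ => Metric.infDist_zero_of_mem (hz'P l))
  refine ⟨fun l s => ((ξ s).1 : Fin (m + 1) → ℝ) l, fun l s => ((ξ s).2 l : EuclideanSpace ℝ (Fin m)),
    ?_, ?_, ?_, ?_, ?_, ?_⟩
  · intro l
    exact (measurable_pi_apply l).comp (measurable_subtype_coe.comp (measurable_fst.comp hξ))
  · intro l
    exact measurable_subtype_coe.comp ((measurable_pi_apply l).comp (measurable_snd.comp hξ))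
  · intro l s
    exact (ξ s).1.2.1 l
  · intro s
    exact (ξ s).1.2.2
  · intro l s
    have h := hξ0 s
    have h1 : 0 ≤ ∑ l, Metric.infDist ((ξ s).2 l : EuclideanSpace ℝ (Fin m)) (P s) :=
      Finset.sum_nonneg fun l _ => Metric.infDist_nonneg
    have h2 : ∑ l, Metric.infDist ((ξ s).2 l : EuclideanSpace ℝ (Fin m)) (P s) = 0 := by
      refine le_antisymm ?_ h1
      rw [← h]
      exact le_add_of_nonneg_right (norm_nonneg _)
    rw [Finset.sum_eq_zero_iff_of_nonneg (fun l _ => Metric.infDist_nonneg)] at h2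
    exact ((hP_closed s).mem_iff_infDist_zero (hne s)).mpr (h2 l (Finset.mem_univ l))
  · intro s
    have h := hξ0 s
    have h1 : 0 ≤ ∑ l, Metric.infDist ((ξ s).2 l : EuclideanSpace ℝ (Fin m)) (P s) :=
      Finset.sum_nonneg fun l _ => Metric.infDist_nonneg
    have h2 : ‖∑ l, ((ξ s).1 : Fin (m + 1) → ℝ) l • ((ξ s).2 l : EuclideanSpace ℝ (Fin m)) - v' s‖ = 0 := by
      refine le_antisymm ?_ (norm_nonneg _)
      rw [← h]
      exact le_add_of_nonneg_left h1
    exact sub_eq_zero.mp (norm_eq_zero.mp h2)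

lemma main_aux {m : ℕ} {S : Type*} (G : MeasurableSpace S) [mS : MeasurableSpace S]
    (lam : Measure S) [IsProbabilityMeasure lam] (hG : G ≤ mS)
    (h_no_atom : ∀ D : Set S, MeasurableSet[mS] D → ¬ IsGAtom mS G lam D)
    (P : S → Set (EuclideanSpace ℝ (Fin m)))
    (hP_meas : ∀ U : Set (EuclideanSpace ℝ (Fin m)), IsOpen U →
      MeasurableSet[mS] {s | (P s ∩ U).Nonempty})
    (hP_closed : ∀ s, IsClosed (P s))
    (C : ℝ) (hP_bd : ∀ s, ∀ y ∈ P s, ‖y‖ ≤ C)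
    (J : ℕ) (rho : Fin J → S → ℝ)
    (hrho_nonneg : ∀ j s, 0 ≤ rho j s)
    (hrho_int : ∀ j, Integrable (rho j) lam)
    (v' : S → EuclideanSpace ℝ (Fin m)) (hv'_meas : Measurable[mS] v')
    (hv'_sel : ∀ s, v' s ∈ convexHull ℝ (P s)) :
    ∃ v : S → EuclideanSpace ℝ (Fin m), Measurable[mS] v ∧ (∀ s, v s ∈ P s) ∧
      ∀ j, lam[fun s => rho j s • v s|G] =ᵐ[lam] lam[fun s => rho j s • v' s|G] := by
  obtain ⟨α, x, hα, hx, hα0, hα1, hxP, hxv⟩ :=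
    caratheodory_meas P hP_meas hP_closed C hP_bd v' hv'_meas hv'_sel
  have hr : ∀ j, ∃ r : S → ℝ, Measurable[mS] r ∧ (∀ s, 0 ≤ r s) ∧ rho j =ᵐ[lam] r := by
    intro j
    obtain ⟨r, hr, he⟩ := (hrho_int j).1
    refine ⟨fun s => max (r s) 0, hr.measurable.max measurable_const, fun s => le_max_right _ _, ?_⟩
    filter_upwards [he] with s hs
    rw [← hs, max_eq_left (hrho_nonneg j s)]
  choose r hrm hr0 hre using hr
  have hri : ∀ j, Integrable (r j) lam := fun j => (hrho_int j).congr (hre j)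
  let W : S → ℝ := fun s => 1 + ∑ j, r j s
  have hWm : Measurable[mS] W := measurable_const.add (Finset.measurable_sum _ fun j _ => hrm j)
  have hWi : Integrable W lam := (integrable_const _).add (integrable_finsetSum _ fun j _ => hri j)
  have hW1 : ∀ s, 1 ≤ W s := fun s =>
    le_add_of_nonneg_right (Finset.sum_nonneg fun j _ => hr0 j s)
  have hW0 : ∀ s, 0 < W s := fun s => zero_lt_one.trans_le (hW1 s)
  have hrW : ∀ j s, r j s ≤ W s := fun j s => by
    have := Finset.single_le_sum (f := fun j => r j s) (fun j _ => hr0 j s) (Finset.mem_univ j)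
    simp only [W]
    linarith
  let ν : Measure S := lam.withDensity fun s => ENNReal.ofReal (W s)
  have : IsFiniteMeasure ν := isFiniteMeasure_withDensity_ofReal hWi.2
  have hac1 : ν ≪ lam := withDensity_absolutelyContinuous _ _
  have hac2 : lam ≪ ν := withDensity_absolutelyContinuous' hWm.ennreal_ofReal.aemeasurable
    (ae_of_all _ fun s => by simpa using hW0 s)
  have hIntg : ∀ (q : S → ℝ) B, MeasurableSet[mS] B →
      ∫ s in B, q s ∂ν = ∫ s in B, W s * q s ∂lam := by
    intro q B hB
    simp only [ν]
    rw [setIntegral_withDensity_eq_setIntegral_toReal_smul hWm.ennreal_ofReal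
      (ae_of_all _ fun s => ENNReal.ofReal_lt_top) q hB]
    congr 1
    ext s
    rw [ENNReal.toReal_ofReal (hW0 s).le, smul_eq_mul]
  have HN : ∀ D, MeasurableSet[mS] D → ν D ≠ 0 → ∃ D₀ ⊆ D, MeasurableSet[mS] D₀ ∧
      ∀ D₁, MeasurableSet[G] D₁ → ν (symmDiff D₀ (D₁ ∩ D)) ≠ 0 := by
    intro D hD hD0
    by_contra hc
    push Not at hc
    refine h_no_atom D hD ⟨pos_iff_ne_zero.mpr fun h => hD0 (hac1 h), ?_⟩
    intro D0 hs hm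
    obtain ⟨D1, h1, h2⟩ := hc D0 hs hm
    exact ⟨D1, h1, hac2 h2⟩
  have hcoord : ∀ c : Fin m, Measurable fun y : EuclideanSpace ℝ (Fin m) => y c := fun c =>
    (EuclideanSpace.proj (𝕜 := ℝ) c).continuous.measurable
  obtain ⟨σ, hσ, hσe⟩ := npoint (ι := Fin J × Fin m) G ν hG HN m
    (fun l i s => r i.1 s / W s * x l s i.2)
    (fun l i => ((hrm i.1).div hWm).mul ((hcoord i.2).comp (hx l))) C (by
      intro l i s
      rw [abs_mul, abs_of_nonneg (div_nonneg (hr0 _ _) (hW0 _).le)]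
      have h1 : r i.1 s / W s ≤ 1 := (div_le_one (hW0 s)).mpr (hrW _ _)
      have h2 : |x l s i.2| ≤ ‖x l s‖ := PiLp.norm_apply_le (x l s) i.2
      exact (mul_le_of_le_one_left (abs_nonneg _) h1).trans (h2.trans (hP_bd s _ (hxP l s))))
    α hα hα0 hα1
  have hvm : Measurable[mS] fun s => x (σ s) s := by
    have : Measurable (Function.uncurry fun (l : Fin (m + 1)) s => x l s) :=
      measurable_from_prod_countable_right fun (l : Fin (m + 1)) => hx l
    exact this.comp (hσ.prodMk measurable_id)
  refine ⟨fun s => x (σ s) s, hvm, fun s => hxP _ _, ?_⟩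
  have hv'bd : ∀ s, ‖v' s‖ ≤ C := by
    intro s
    have : convexHull ℝ (P s) ⊆ Metric.closedBall 0 C :=
      convexHull_min (fun y hy => by simpa using hP_bd s y hy) (convex_closedBall _ _)
    simpa using this (hv'_sel s)
  have hI : ∀ j (u : S → EuclideanSpace ℝ (Fin m)), Measurable[mS] u → (∀ s, ‖u s‖ ≤ C) →
      Integrable (fun s => rho j s • u s) lam := fun j u hu hb =>
    (hrho_int j).smul_bdd C hu.aestronglyMeasurable (ae_of_all _ hb)
  intro j
  have i1 := hI j _ hvm (fun s => hP_bd s _ (hxP _ _))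
  have i2 := hI j v' hv'_meas hv'bd
  symm
  refine ae_eq_condExp_of_forall_setIntegral_eq hG i1 (fun _ _ _ => integrable_condExp.integrableOn)
    ?_ stronglyMeasurable_condExp.aestronglyMeasurable
  intro B hB _
  rw [setIntegral_condExp hG i2 hB]
  ext c
  have hpr : ∀ u : S → EuclideanSpace ℝ (Fin m), Integrable (fun s => rho j s • u s) lam →
      (∫ s in B, rho j s • u s ∂lam) c = ∫ s in B, r j s * u s c ∂lam := by
    intro u hu
    have := (EuclideanSpace.proj (𝕜 := ℝ) c : EuclideanSpace ℝ (Fin m) →L[ℝ] ℝ).integral_comp_comm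
      (hu.integrableOn (s := B))
    have h2 : (∫ s in B, rho j s • u s ∂lam) c = ∫ s in B, rho j s * u s c ∂lam := by
      simpa using this.symm
    rw [h2]
    apply integral_congr_ae
    filter_upwards [ae_restrict_of_ae (hre j)] with s hs
    rw [hs]
  rw [hpr _ i1, hpr _ i2]
  have key := hσe (j, c) B hB
  rw [hIntg _ B (hG _ hB), hIntg _ B (hG _ hB)] at key
  have e1 : ∀ s, W s * (r j s / W s * x (σ s) s c) = r j s * x (σ s) s c := by
    intro s
    rw [← mul_assoc, mul_div_cancel₀ _ (hW0 s).ne']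
  have e2 : ∀ s, W s * ∑ l, α l s * (r j s / W s * x l s c) = r j s * v' s c := by
    intro s
    have : v' s c = ∑ l, α l s * x l s c := by
      rw [← hxv s]
      simp
    rw [this, Finset.mul_sum, Finset.mul_sum]
    refine Finset.sum_congr rfl fun l _ => ?_
    have := (hW0 s).ne'
    field_simp
  simp only [e1, e2] at key
  exact key.symm


/-- On an atomless probability space with no `G`-atom, any measurable selection `v'` of the
convex hull of a uniformly bounded, measurable, closed-valued correspondence `P` can be
matched by a measurable selection `v*` of `P` with
`E(v* ρⱼ | G) = E(v' ρⱼ | G)` a.e. for each `j = 1, …, J`. -/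
theorem exists_selection_condexp_smul_eq
    {m : ℕ} {S : Type*} [mS : MeasurableSpace S]
    (lam : Measure S) [IsProbabilityMeasure lam]
    -- `lam` is atomless
    (h_atomless : ∀ D : Set S, MeasurableSet[mS] D → 0 < lam D →
      ∃ D₀ ⊆ D, MeasurableSet[mS] D₀ ∧ 0 < lam D₀ ∧ lam D₀ < lam D)
    (G : MeasurableSpace S) (hG : G ≤ mS)
    (h_no_atom : ∀ D : Set S, MeasurableSet[mS] D → ¬ IsGAtom mS G lam D)
    -- `P` is a measurable, closed-valued correspondence, uniformly bounded by `C`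
    (P : S → Set (EuclideanSpace ℝ (Fin m)))
    (hP_meas : ∀ U : Set (EuclideanSpace ℝ (Fin m)), IsOpen U →
      MeasurableSet[mS] {s | (P s ∩ U).Nonempty})
    (hP_closed : ∀ s, IsClosed (P s))
    (C : ℝ) (hP_bd : ∀ s, ∀ y ∈ P s, ‖y‖ ≤ C)
    -- nonnegative integrable weights
    (J : ℕ) (rho : Fin J → S → ℝ)
    (hrho_nonneg : ∀ j s, 0 ≤ rho j s)
    (hrho_int : ∀ j, Integrable (rho j) lam)
    -- `v'` is a measurable selection of the pointwise convex hull of `P`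
    (v' : S → EuclideanSpace ℝ (Fin m)) (hv'_meas : Measurable[mS] v')
    (hv'_sel : ∀ s, v' s ∈ convexHull ℝ (P s)) :
    ∃ v : S → EuclideanSpace ℝ (Fin m), Measurable[mS] v ∧ (∀ s, v s ∈ P s) ∧
      ∀ j, lam[fun s => rho j s • v s|G] =ᵐ[lam] lam[fun s => rho j s • v' s|G] := by
  exact main_aux (mS := mS) G lam hG h_no_atom P hP_meas hP_closed C hP_bd J rho hrho_nonneg hrho_int v' hv'_meas hv'_sel
end

section
/- Let (S, Sigma, lambda) be a probability space, G a sub-sigma-algebra of Sigma, and D in Sigma with lambda(D) > 0. Suppose D is a G-atom in the sense of Dynkin and Evstigneev: for every Sigma-measurable D_0 contained in D, lambda({ s in S : 0 < E(1_{D_0} | G)(s) < E(1_D | G)(s) }) = 0. Then D is a G-atom in the following sense: for every Sigma-measurable D_0 contained in D there exists D_1 in G with lambda(D_0 symmetric-difference (D_1 intersect D)) = 0. -/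
open MeasureTheory

/-- A `G`-atom in the sense of Dynkin–Evstigneev is a `G`-atom in the sense of He–Sun:
if for every measurable `D₀ ⊆ D` the set `{0 < E(1_{D₀}|G) < E(1_D|G)}` is null, then
every measurable `D₀ ⊆ D` agrees modulo null sets with `D₁ ∩ D` for some `G`-measurable
`D₁`. -/
theorem gAtom_of_dynkinEvstigneev_gAtom
    {S : Type*} [mS : MeasurableSpace S]
    (lam : Measure S) [IsProbabilityMeasure lam]
    (G : MeasurableSpace S) (hG : G ≤ mS)
    (D : Set S) (hD : MeasurableSet[mS] D) (hD_pos : 0 < lam D)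
    (hDE : ∀ D₀ ⊆ D, MeasurableSet[mS] D₀ →
      lam {s | 0 < (lam[D₀.indicator (fun _ => (1 : ℝ))|G]) s ∧
        (lam[D₀.indicator (fun _ => (1 : ℝ))|G]) s
          < (lam[D.indicator (fun _ => (1 : ℝ))|G]) s} = 0) :
    ∀ D₀ ⊆ D, MeasurableSet[mS] D₀ →
      ∃ D₁ : Set S, MeasurableSet[G] D₁ ∧ lam (symmDiff D₀ (D₁ ∩ D)) = 0 := by
  classical
  intro D₀ hsub hD₀
  have key : ∀ B : Set S, MeasurableSet[mS] B → ∀ A : Set S, MeasurableSet[G] A →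
      ∫ x in A, (lam[B.indicator (fun _ => (1 : ℝ))|G]) x ∂lam = lam.real (B ∩ A) := by
    intro B hB A hA
    rw [setIntegral_condExp hG ((integrable_const (1 : ℝ)).indicator hB) hA,
      integral_indicator_const _ hB, measureReal_restrict_apply hB]
    simp
  have hnn : 0 ≤ᵐ[lam] lam[D₀.indicator (fun _ => (1 : ℝ))|G] :=
    condExp_nonneg (Filter.Eventually.of_forall fun x =>
      Set.indicator_nonneg (fun _ _ => zero_le_one) x)
  have hle : lam[D₀.indicator (fun _ => (1 : ℝ))|G] ≤ᵐ[lam]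
      lam[D.indicator (fun _ => (1 : ℝ))|G] :=
    condExp_mono ((integrable_const (1 : ℝ)).indicator hD₀)
      ((integrable_const (1 : ℝ)).indicator hD)
      (Filter.Eventually.of_forall fun x =>
        Set.indicator_le_indicator_of_subset hsub (fun _ => zero_le_one) x)
  have hz : ∀ᵐ s ∂lam, ¬ (0 < (lam[D₀.indicator (fun _ => (1 : ℝ))|G]) s ∧
        (lam[D₀.indicator (fun _ => (1 : ℝ))|G]) s
          < (lam[D.indicator (fun _ => (1 : ℝ))|G]) s) := by
    rw [ae_iff]
    simpa only [not_not] using hDE D₀ hsub hD₀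
  have k0 := key D₀ hD₀
  have k1 := key D hD
  have hm : StronglyMeasurable[G] (lam[D₀.indicator (fun _ => (1 : ℝ))|G]) :=
    stronglyMeasurable_condExp
  generalize lam[D₀.indicator (fun _ => (1 : ℝ))|G] = f at *
  generalize lam[D.indicator (fun _ => (1 : ℝ))|G] = g at *
  have hA : MeasurableSet[G] {s | 0 < f s} :=
    @measurableSet_lt _ _ _ _ _ G _ _ _ _ _ (@measurable_const _ _ _ G 0) hm.measurable
  have hA' : MeasurableSet[mS] {s | 0 < f s} := hG _ hA
  have e1 : lam.real (D₀ ∩ {s | 0 < f s}) = lam.real (D ∩ {s | 0 < f s}) := by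
    rw [← k0 _ hA, ← k1 _ hA]
    apply setIntegral_congr_ae hA'
    filter_upwards [hle, hz] with s h1 h2 h3
    exact le_antisymm h1 (not_lt.1 fun h => h2 ⟨h3, h⟩)
  have e2 : lam.real (D₀ ∩ {s | 0 < f s}ᶜ) = 0 := by
    rw [← k0 _ hA.compl]
    apply setIntegral_eq_zero_of_ae_eq_zero
    filter_upwards [hnn] with s h1 h2
    exact le_antisymm (not_lt.1 h2) h1
  refine ⟨{s | 0 < f s}, hA, ?_⟩
  have e3 : lam ((D ∩ {s | 0 < f s}) \ (D₀ ∩ {s | 0 < f s})) = 0 := by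
    rw [← measureReal_eq_zero_iff, measureReal_diff
      (Set.inter_subset_inter_left _ hsub) (hD₀.inter hA'), e1, sub_self]
  rw [measureReal_eq_zero_iff] at e2
  refine measure_mono_null ?_ (measure_union_null e2 e3)
  intro x hx
  have := @hsub x
  simp only [Set.mem_symmDiff, Set.mem_inter_iff, Set.mem_union, Set.mem_diff,
    Set.mem_compl_iff] at hx ⊢
  tauto
end

section
/- Suppose (S, Sigma, lambda) is a probability space, G is a sub-sigma-algebra of Sigma, and Sigma has a G-atom D with lambda(D) > 0. Then there exists a Sigma-measurable correspondence G from S to subsets of {0,1} (namely G(s) = {0,1} for s in D and G(s) = {0} for s not in D) such that I^{(Sigma,G)}_G is not equal to I^{(Sigma,G)}_{co(G)}; in particular, the function f = (1/2) 1_D is a Sigma-measurable selection of co(G), but there is no Sigma-measurable selection g of G with E(g | G) = E(f | G) lambda-almost everywhere. -/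
open MeasureTheory

theorem gAtom_aux {S : Type*} (G : MeasurableSpace S) {mS : MeasurableSpace S}
    (lam : Measure S) [IsProbabilityMeasure lam] (hG : G ≤ mS)
    (D : Set S) (hD : MeasurableSet D) (hD_atom : IsGAtom mS G lam D)
    (g : S → ℝ) (hg : Measurable g) (h1 : ∀ s ∈ D, g s = 0 ∨ g s = 1)
    (h0 : ∀ s, s ∉ D → g s = 0)
    (h : lam[g|G] =ᵐ[lam] lam[fun s => (1 / 2 : ℝ) * D.indicator (fun _ => (1 : ℝ)) s|G]) :
    False := by
  obtain ⟨hpos, hat⟩ := hD_atom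
  have hsub : g ⁻¹' {1} ⊆ D := by
    intro s hs
    by_contra hn
    have := h0 s hn
    simp_all
  obtain ⟨D₁, hD₁, hnull⟩ := hat (g ⁻¹' {1}) hsub (hg (measurableSet_singleton 1))
  have hae : g ⁻¹' {1} =ᵐ[lam] (D₁ ∩ D : Set S) := measure_symmDiff_eq_zero_iff.mp hnull
  have hD₁' : MeasurableSet D₁ := hG _ hD₁
  have hgeq : g = (g ⁻¹' {1}).indicator (fun _ => (1 : ℝ)) := by
    funext s
    by_cases hs : g s = 1
    · rw [Set.indicator_of_mem (by simpa using hs), hs]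
    · rw [Set.indicator_of_notMem (by simpa using hs)]
      by_cases hd : s ∈ D
      · exact (h1 s hd).resolve_right hs
      · exact h0 s hd
  have hgae : g =ᵐ[lam] (D₁ ∩ D).indicator (fun _ => (1 : ℝ)) := by
    rw [hgeq]
    exact indicator_ae_eq_of_ae_eq_set hae
  have hfi : Integrable (fun s => (1 / 2 : ℝ) * D.indicator (fun _ => (1 : ℝ)) s) lam :=
    ((integrable_const (1 : ℝ)).indicator hD).const_mul _
  have hgi : Integrable g lam :=
    ((integrable_const (1 : ℝ)).indicator (hD₁'.inter hD)).congr hgae.symm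
  have key : ∀ A : Set S, MeasurableSet[G] A →
      lam.real (D₁ ∩ D ∩ A) = 1 / 2 * lam.real (D ∩ A) := by
    intro A hA
    have e1 := setIntegral_condExp hG hgi hA
    have e2 := setIntegral_condExp hG hfi hA
    have e3 : ∫ x in A, (lam[g|G]) x ∂lam = ∫ x in A,
        (lam[fun s => (1 / 2 : ℝ) * D.indicator (fun _ => (1 : ℝ)) s|G]) x ∂lam :=
      integral_congr_ae (ae_restrict_of_ae h)
    have e4 : ∫ x in A, g x ∂lam = lam.real (D₁ ∩ D ∩ A) := by
      rw [integral_congr_ae (ae_restrict_of_ae hgae), integral_indicator_const _ (hD₁'.inter hD)]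
      simp [measureReal_restrict_apply (hD₁'.inter hD)]
    have e5 : ∫ x in A, (1 / 2 : ℝ) * D.indicator (fun _ => (1 : ℝ)) x ∂lam
        = 1 / 2 * lam.real (D ∩ A) := by
      rw [integral_const_mul, integral_indicator_const _ hD]
      simp [measureReal_restrict_apply hD]
    rw [← e4, ← e5, ← e1, ← e2, e3]
  have k1 := key D₁ hD₁
  have k2 := key Set.univ MeasurableSet.univ
  have e : D₁ ∩ D ∩ D₁ = D ∩ D₁ := by
    ext x; simp only [Set.mem_inter_iff]; tauto
  rw [e] at k1
  rw [Set.inter_univ, Set.inter_univ, Set.inter_comm D₁ D] at k2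
  have : lam.real D = 0 := by linarith
  rw [measureReal_eq_zero_iff] at this
  exact hpos.ne' this

open Classical in
/-- If `Σ` has a `G`-atom `D`, then for the measurable correspondence
`F(s) = {0,1}` on `D` and `F(s) = {0}` off `D`, the function `f = (1/2)·1_D` is a
measurable selection of `co F`, but no measurable selection `g` of `F` satisfies
`E(g|G) = E(f|G)` a.e.; in particular `I_F ≠ I_{co F}`. -/
theorem exists_correspondence_condexp_selection_ne_of_gAtom
    {S : Type*} [mS : MeasurableSpace S]
    (lam : Measure S) [IsProbabilityMeasure lam]
    (G : MeasurableSpace S) (hG : G ≤ mS)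
    (D : Set S) (hD : MeasurableSet[mS] D)
    (hD_atom : IsGAtom mS G lam D) :
    ∃ F : S → Set ℝ,
      F = (fun s => if s ∈ D then ({0, 1} : Set ℝ) else {0}) ∧
      -- `F` is a measurable correspondence
      (∀ U : Set ℝ, IsOpen U → MeasurableSet[mS] {s | (F s ∩ U).Nonempty}) ∧
      -- `f = (1/2)·1_D` is a measurable selection of `co F`
      Measurable[mS] (fun s => (1 / 2 : ℝ) * D.indicator (fun _ => (1 : ℝ)) s) ∧
      (∀ s, (1 / 2 : ℝ) * D.indicator (fun _ => (1 : ℝ)) s ∈ convexHull ℝ (F s)) ∧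
      -- but no measurable selection of `F` has the same conditional expectation as `f`
      ¬ ∃ g : S → ℝ, Measurable[mS] g ∧ (∀ s, g s ∈ F s) ∧
        lam[g|G] =ᵐ[lam] lam[fun s => (1 / 2 : ℝ) * D.indicator (fun _ => (1 : ℝ)) s|G] := by
  refine ⟨_, rfl, ?_, ?_, ?_, ?_⟩
  · intro U _
    by_cases hU0 : (0 : ℝ) ∈ U
    · convert @MeasurableSet.univ S mS
      rw [Set.eq_univ_iff_forall]
      intro s
      refine ⟨0, ?_, hU0⟩
      split_ifs <;> simp
    · by_cases hU1 : (1 : ℝ) ∈ U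
      · convert hD
        ext s
        by_cases hs : s ∈ D
        · simp only [Set.mem_ofPred_eq, hs, if_true, iff_true]
          exact ⟨1, by simp, hU1⟩
        · simp [hs, hU0]
      · convert @MeasurableSet.empty S mS
        rw [Set.eq_empty_iff_forall_notMem]
        rintro s ⟨x, hx, hxU⟩
        split_ifs at hx
        · rcases hx with rfl | rfl
          · exact hU0 hxU
          · exact hU1 hxU
        · rw [Set.mem_singleton_iff] at hx
          exact hU0 (hx ▸ hxU)
  · exact (@measurable_const _ _ _ mS (1 : ℝ)).indicator hD |>.const_mul _
  · intro s
    by_cases hs : s ∈ D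
    · simp only [hs, if_true, Set.indicator_of_mem, convexHull_pair]
      exact ⟨1 / 2, 1 / 2, by norm_num, by norm_num, by norm_num, by norm_num⟩
    · simp [hs]
  · rintro ⟨g, hg, hsel, h⟩
    refine gAtom_aux G lam hG D hD hD_atom g hg ?_ ?_ h
    · intro s hs
      simpa [hs] using hsel s
    · intro s hs
      simpa [hs] using hsel s
end

section
/- Let (S, Sigma, lambda) be a probability space, G a sub-sigma-algebra of Sigma, and D in Sigma a G-atom. Then there is no Sigma-measurable set D_2 contained in D such that E(1_{D_2} | G) = (1/2) E(1_D | G) lambda-almost everywhere. Equivalently, if D_2 is a measurable subset of D with E(1_{D_2} | G) = (1/2) E(1_D | G) almost everywhere, then lambda(E intersect D_2) = (1/2) lambda(E) for every measurable E contained in D, which forces the contradiction lambda(D_2) = (1/2) lambda(D) > 0 and lambda(D_2) = (1/2) lambda(D_2). -/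
open MeasureTheory

/-- If `D` is a `G`-atom, then there is no measurable `D₂ ⊆ D` with
`E(1_{D₂}|G) = (1/2)·E(1_D|G)` almost everywhere. -/
theorem not_exists_half_condexp_indicator_of_gAtom
    {S : Type*} [mS : MeasurableSpace S]
    (lam : Measure S) [IsProbabilityMeasure lam]
    (G : MeasurableSpace S) (hG : G ≤ mS)
    (D : Set S) (hD : MeasurableSet[mS] D)
    (hD_atom : IsGAtom mS G lam D) :
    ¬ ∃ D₂ : Set S, D₂ ⊆ D ∧ MeasurableSet[mS] D₂ ∧
      lam[D₂.indicator (fun _ => (1 : ℝ))|G]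
        =ᵐ[lam] fun s => (1 / 2 : ℝ) * (lam[D.indicator (fun _ => (1 : ℝ))|G]) s := by
  rintro ⟨D₂, hsub, hD₂, hce⟩
  obtain ⟨hpos, hat⟩ := hD_atom
  obtain ⟨D₁, hD₁, hsd⟩ := hat D₂ hsub hD₂
  have key : ∀ B : Set S, MeasurableSet[G] B →
      lam.real (D₂ ∩ B) = (1 / 2 : ℝ) * lam.real (D ∩ B) := by
    intro B hB
    have hi : ∀ A : Set S, MeasurableSet[mS] A →
        ∫ x in B, (lam[A.indicator (fun _ => (1 : ℝ))|G]) x ∂lam = lam.real (A ∩ B) := by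
      intro A hA
      rw [setIntegral_condExp hG ((integrable_const (1 : ℝ)).indicator hA) hB,
        integral_indicator hA, Measure.restrict_restrict hA]
      simp
    rw [← hi D₂ hD₂, ← hi D hD, ← integral_const_mul]
    exact integral_congr_ae (ae_restrict_of_ae hce)
  have hae : D₂ =ᵐ[lam] (D₁ ∩ D : Set S) := measure_symmDiff_eq_zero_iff.mp hsd
  have h1 := key Set.univ MeasurableSet.univ
  have h2 := key D₁ hD₁
  have h3 : lam.real D₂ = lam.real (D ∩ D₁) := by
    rw [Set.inter_comm]; exact measureReal_congr hae
  have h4 : lam.real (D₂ ∩ D₁) = lam.real D₂ := by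
    refine measureReal_congr ?_
    filter_upwards [hae] with x hx
    have hx' : (x ∈ D₂) = (x ∈ D₁ ∩ D) := hx
    change (x ∈ D₂ ∩ D₁) = (x ∈ D₂)
    simp only [Set.mem_inter_iff, eq_iff_iff] at hx' ⊢
    tauto
  simp only [Set.inter_univ] at h1
  have h5 : 0 < lam.real D := ENNReal.toReal_pos hpos.ne' (measure_ne_top _ _)
  linarith
end

section
/- Let H and R be standard Borel spaces with Borel sigma-algebras cal-H and cal-R, let kappa be a probability measure on (H, cal-H), and let (nu_h)_{h in H} be a Markov kernel from H to R such that nu_h is an atomless probability measure for kappa-almost every h. Define the probability measure lambda on (H x R, cal-H tensor cal-R) by lambda(Z) = integral over H of nu_h(Z_h) d kappa(h), where Z_h = { r : (h, r) in Z }. Let G = { E x R : E in cal-H }. Then cal-H tensor cal-R has no G-atom under lambda: for every measurable D contained in H x R with lambda(D) > 0 there exists a measurable D_0 contained in D such that for every E in cal-H, lambda(D_0 symmetric-difference ((E x R) intersect D)) > 0. -/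
open MeasureTheory ProbabilityTheory

/-- A measure that is trivial on a countable generating family is trivial on all measurable sets. -/
lemma zero_one_of_generating {R : Type*} [m : MeasurableSpace R] (μ : Measure R)
    (C : Set (Set R)) (hm : m = MeasurableSpace.generateFrom C)
    (hC : ∀ B ∈ C, μ B = 0 ∨ μ Bᶜ = 0) (B : Set R) (hB : MeasurableSet B) :
    μ B = 0 ∨ μ Bᶜ = 0 := by
  rw [hm] at hB
  induction B, hB using MeasurableSpace.generateFrom_induction with
  | hC t ht _ => exact hC t ht
  | empty => simp
  | compl t _ ih => rw [compl_compl]; exact ih.symm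
  | iUnion f _ ih =>
    by_cases h : ∃ n, μ (f n)ᶜ = 0
    · obtain ⟨n, hn⟩ := h
      right
      exact measure_mono_null (Set.compl_subset_compl.2 (Set.subset_iUnion f n)) hn
    · left
      push Not at h
      exact measure_iUnion_null fun n => (ih n).resolve_right (h n)

/-- **Noisy state spaces have no cylinder atoms**: if `ν` is a Markov kernel from a
standard Borel space `H` to a standard Borel space `R` which is atomless for
`kappa`-almost every `h`, and `lam` is the induced measure on `H × R`, then the product
σ-algebra has no atom over the sub-σ-algebra of cylinder sets `E × R`. -/
theorem no_cylinder_atom_of_ae_atomless_kernel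
    {H R : Type*} [MeasurableSpace H] [StandardBorelSpace H]
    [MeasurableSpace R] [StandardBorelSpace R]
    (kappa : Measure H) [IsProbabilityMeasure kappa]
    (ν : Kernel H R) [IsMarkovKernel ν]
    -- `ν h` is atomless for `kappa`-almost every `h`
    (h_atomless : ∀ᵐ h ∂kappa, ∀ B : Set R, MeasurableSet B → 0 < ν h B →
      ∃ B' ⊆ B, MeasurableSet B' ∧ 0 < ν h B' ∧ ν h B' < ν h B)
    -- `lam Z = ∫ ν h (Z_h) dkappa(h)`
    (lam : Measure (H × R))
    (h_lam : ∀ Z : Set (H × R), MeasurableSet Z →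
      lam Z = ∫⁻ h, ν h (Prod.mk h ⁻¹' Z) ∂kappa) :
    ∀ D : Set (H × R), MeasurableSet D → 0 < lam D →
      ∃ D₀ ⊆ D, MeasurableSet D₀ ∧ ∀ E : Set H, MeasurableSet E →
        0 < lam (symmDiff D₀ ((E ×ˢ (Set.univ : Set R)) ∩ D)) := by
  intro D hD hpos
  by_contra hcon
  push Not at hcon
  obtain ⟨C, hCc, hCg⟩ := MeasurableSpace.CountablyGenerated.isCountablyGenerated (α := R)
  have key : ∀ B ∈ C, ∀ᵐ h ∂kappa,
      ν h (B ∩ Prod.mk h ⁻¹' D) = 0 ∨ ν h (Bᶜ ∩ Prod.mk h ⁻¹' D) = 0 := by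
    intro B hB
    have hBm : MeasurableSet B := by rw [hCg]; exact MeasurableSpace.measurableSet_generateFrom hB
    have hD₀ : MeasurableSet (((Set.univ : Set H) ×ˢ B) ∩ D) :=
      (MeasurableSet.univ.prod hBm).inter hD
    obtain ⟨E, hE, hE0⟩ := hcon _ Set.inter_subset_right hD₀
    have hS : MeasurableSet (symmDiff (((Set.univ : Set H) ×ˢ B) ∩ D)
        ((E ×ˢ (Set.univ : Set R)) ∩ D)) :=
      hD₀.symmDiff ((hE.prod MeasurableSet.univ).inter hD)
    rw [nonpos_iff_eq_zero, h_lam _ hS,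
      lintegral_eq_zero_iff (Kernel.measurable_kernel_prodMk_left hS)] at hE0
    filter_upwards [hE0] with h hh
    by_cases hhE : h ∈ E
    · right
      refine measure_mono_null ?_ hh
      rintro r ⟨h1, h2⟩
      exact Or.inr ⟨⟨⟨hhE, trivial⟩, h2⟩, fun h3 => h1 h3.1.2⟩
    · left
      refine measure_mono_null ?_ hh
      rintro r ⟨h1, h2⟩
      exact Or.inl ⟨⟨⟨trivial, h1⟩, h2⟩, fun h3 => hhE h3.1.1⟩
  have key' := (ae_ball_iff hCc).2 key
  refine hpos.ne' ?_
  rw [h_lam D hD, lintegral_eq_zero_iff (Kernel.measurable_kernel_prodMk_left hD)]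
  filter_upwards [key', h_atomless] with h hk ha
  have hDh : MeasurableSet (Prod.mk h ⁻¹' D) := measurable_prodMk_left hD
  by_contra hne
  obtain ⟨B', hsub, hB', hp, hlt⟩ := ha _ hDh (pos_iff_ne_zero.2 hne)
  have h01 := zero_one_of_generating ((ν h).restrict (Prod.mk h ⁻¹' D)) C hCg (by
    intro B hB
    rw [Measure.restrict_apply' hDh, Measure.restrict_apply' hDh]
    exact hk B hB) B' hB'
  rw [Measure.restrict_apply' hDh, Measure.restrict_apply' hDh,
    Set.inter_eq_left.2 hsub] at h01
  rcases h01 with h0 | h0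
  · exact hp.ne' h0
  · refine hlt.not_ge ?_
    calc ν h (Prod.mk h ⁻¹' D) ≤ ν h (B' ∪ (B'ᶜ ∩ Prod.mk h ⁻¹' D)) := by
          refine measure_mono fun r hr => ?_
          by_cases hb : r ∈ B'
          · exact Or.inl hb
          · exact Or.inr ⟨hb, hr⟩
      _ ≤ ν h B' + ν h (B'ᶜ ∩ Prod.mk h ⁻¹' D) := measure_union_le _ _
      _ = ν h B' := by rw [h0, add_zero]
end

section
/- Let H and R be standard Borel spaces, kappa a probability measure on H, and (nu_h)_{h in H} a Markov kernel from H to R such that nu_h is an atomless probability measure for kappa-almost every h. Then for every measurable D contained in H x R there exists a measurable D_0 contained in D such that nu_h((D_0)_h) = (1/2) nu_h(D_h) for kappa-almost every h, where D_h = { r : (h, r) in D }. -/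
open MeasureTheory ProbabilityTheory
open scoped ENNReal

/-- The quantile-type half line has exactly half of the mass of an atomless measure. -/
lemma half_line_aux (μ : Measure ℝ) [IsFiniteMeasure μ] (hμ : ∀ x, μ {x} = 0) :
    μ (⋃ q : {q : ℚ // μ (Set.Iic (q : ℝ)) ≤ (1 / 2 : ℝ≥0∞) * μ Set.univ},
      Set.Iic ((q : ℚ) : ℝ)) = (1 / 2 : ℝ≥0∞) * μ Set.univ := by
  set c := (1 / 2 : ℝ≥0∞) * μ Set.univ with hc
  have hcc : c + c = μ Set.univ := by
    rw [hc, ← add_mul, one_div, ENNReal.inv_two_add_inv_two, one_mul]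
  have hctop : c ≠ ∞ := by
    intro h
    rw [h] at hcc
    exact measure_ne_top μ Set.univ (by rw [← hcc]; simp)
  set L := ⋃ q : {q : ℚ // μ (Set.Iic (q : ℝ)) ≤ c}, Set.Iic ((q : ℚ) : ℝ) with hL
  set V := ⋃ q : {q : ℚ // ¬ μ (Set.Iic (q : ℝ)) ≤ c}, Set.Ioi ((q : ℚ) : ℝ) with hV
  have h1 : μ L ≤ c := by
    rw [hL, Directed.measure_iUnion]
    · exact iSup_le fun q => q.2
    · apply Monotone.directed_le
      intro a b hab
      exact Set.Iic_subset_Iic.2 (by exact_mod_cast hab)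
  have h2 : μ V ≤ c := by
    rw [hV, Directed.measure_iUnion]
    · refine iSup_le fun q => ?_
      have hq := not_le.1 q.2
      rw [← Set.compl_Iic, measure_compl measurableSet_Iic (measure_ne_top _ _), ← hcc]
      refine tsub_le_iff_right.2 ?_
      gcongr
    · apply Antitone.directed_le
      intro a b hab
      exact Set.Ioi_subset_Ioi (by exact_mod_cast hab)
  have h3 : ((L ∪ V)ᶜ).Subsingleton := by
    have key : ∀ x ∈ (L ∪ V)ᶜ, ∀ y ∈ (L ∪ V)ᶜ, ¬ x < y := by
      intro x hx y hy hxy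
      obtain ⟨q, hq1, hq2⟩ := exists_rat_btwn hxy
      by_cases hq : μ (Set.Iic (q : ℝ)) ≤ c
      · exact hx (Or.inl (Set.mem_iUnion.2 ⟨⟨q, hq⟩, hq1.le⟩))
      · exact hy (Or.inr (Set.mem_iUnion.2 ⟨⟨q, hq⟩, hq2⟩))
    intro x hx y hy
    exact le_antisymm (not_lt.1 (key y hy x hx)) (not_lt.1 (key x hx y hy))
  have h4 : μ ((L ∪ V)ᶜ) = 0 := by
    rcases h3.eq_empty_or_singleton with h | ⟨x, h⟩
    · rw [h]; simp
    · rw [h]; exact hμ x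
  refine le_antisymm h1 ?_
  have h5 : c + c ≤ μ L + c := by
    calc c + c = μ ((L ∪ V) ∪ (L ∪ V)ᶜ) := by rw [hcc, Set.union_compl_self]
      _ ≤ μ (L ∪ V) + μ ((L ∪ V)ᶜ) := measure_union_le _ _
      _ = μ (L ∪ V) := by rw [h4, add_zero]
      _ ≤ μ L + μ V := measure_union_le _ _
      _ ≤ μ L + c := by gcongr
  exact (ENNReal.add_le_add_iff_right hctop).1 h5

/-- If `ν` is a Markov kernel from a standard Borel space `H` to a standard Borel space
`R` which is atomless for `kappa`-almost every `h`, then every measurable `D ⊆ H × R` has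
a measurable subset `D₀` whose sections halve the measure of the sections of `D`,
`kappa`-almost everywhere. -/
theorem exists_measurable_subset_halving_sections
    {H R : Type*} [MeasurableSpace H] [StandardBorelSpace H]
    [MeasurableSpace R] [StandardBorelSpace R]
    (kappa : Measure H) [IsProbabilityMeasure kappa]
    (ν : Kernel H R) [IsMarkovKernel ν]
    (h_atomless : ∀ᵐ h ∂kappa, ∀ B : Set R, MeasurableSet B → 0 < ν h B →
      ∃ B' ⊆ B, MeasurableSet B' ∧ 0 < ν h B' ∧ ν h B' < ν h B) :
    ∀ D : Set (H × R), MeasurableSet D →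
      ∃ D₀ ⊆ D, MeasurableSet D₀ ∧
        ∀ᵐ h ∂kappa, ν h (Prod.mk h ⁻¹' D₀) = (1 / 2 : ℝ≥0∞) * ν h (Prod.mk h ⁻¹' D) := by
  intro D hD
  obtain ⟨f, hf⟩ := exists_measurableEmbedding_real R
  let E : ℚ → Set (H × R) := fun q => D ∩ {p | f p.2 ≤ q}
  have hE : ∀ q, MeasurableSet (E q) := fun q =>
    hD.inter (measurableSet_le (hf.measurable.comp measurable_snd) measurable_const)
  let G : ℚ → Set (H × R) := fun q =>
    E q ∩ {p | ν p.1 (Prod.mk p.1 ⁻¹' E q) ≤ (1 / 2 : ℝ≥0∞) * ν p.1 (Prod.mk p.1 ⁻¹' D)}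
  have hG : ∀ q, MeasurableSet (G q) := fun q =>
    (hE q).inter (measurableSet_le
      ((Kernel.measurable_kernel_prodMk_left (hE q)).comp measurable_fst)
      (((Kernel.measurable_kernel_prodMk_left hD).const_mul _).comp measurable_fst))
  refine ⟨⋃ q, G q, Set.iUnion_subset fun q p hp => hp.1.1, MeasurableSet.iUnion hG, ?_⟩
  filter_upwards [h_atomless] with h hh
  have hDh : MeasurableSet (Prod.mk h ⁻¹' D) := measurable_prodMk_left hD
  have hsing : ∀ x, ν h {x} = 0 := by
    intro x
    by_contra hx
    obtain ⟨B', hB', -, h1, h2⟩ := hh {x} (measurableSet_singleton x) (pos_iff_ne_zero.2 hx)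
    rcases Set.subset_singleton_iff_eq.1 hB' with h | h
    · simp [h] at h1
    · simp [h] at h2
  let μ : Measure ℝ := ((ν h).restrict (Prod.mk h ⁻¹' D)).map f
  have hμ : ∀ s, MeasurableSet s → μ s = ν h (f ⁻¹' s ∩ Prod.mk h ⁻¹' D) := by
    intro s hs
    simp only [μ]
    rw [Measure.map_apply hf.measurable hs, Measure.restrict_apply (hf.measurable hs)]
  have hμ0 : ∀ x, μ {x} = 0 := by
    intro x
    rw [hμ _ (measurableSet_singleton x)]
    have hs : (f ⁻¹' {x}).Subsingleton := Set.subsingleton_singleton.preimage hf.injective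
    refine measure_mono_null Set.inter_subset_left ?_
    rcases hs.eq_empty_or_singleton with h | ⟨y, h⟩
    · rw [h]; simp
    · rw [h]; exact hsing y
  have huniv : μ Set.univ = ν h (Prod.mk h ⁻¹' D) := by
    rw [hμ _ MeasurableSet.univ]; simp
  have hIic : ∀ q : ℚ, μ (Set.Iic (q : ℝ)) = ν h (Prod.mk h ⁻¹' E q) := by
    intro q
    rw [hμ _ measurableSet_Iic]
    congr 1
    ext r
    simp [E, and_comm]
  have main := half_line_aux μ hμ0
  rw [hμ _ (MeasurableSet.iUnion fun q => measurableSet_Iic), huniv] at main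
  rw [← main]
  congr 1
  ext r
  simp only [G, E, hIic, Set.mem_preimage, Set.mem_iUnion, Set.mem_inter_iff, Set.mem_setOf_eq,
    Set.mem_Iic, Subtype.exists, exists_prop]
  constructor
  · rintro ⟨q, ⟨h1, h2⟩, h3⟩
    exact ⟨⟨q, h3, h2⟩, h1⟩
  · rintro ⟨⟨q, h3, h2⟩, h1⟩
    exact ⟨q, ⟨h1, h2⟩, h3⟩
end

section
/- Let (S, Sigma, mu) be an atomless probability space and let phi : S -> [0,1] be a measurable map that generates Sigma modulo mu-null sets, meaning that for every A in Sigma there exists a Borel set B contained in [0,1] with mu(A symmetric-difference phi^{-1}(B)) = 0. Then the pushforward measure mu composed with phi^{-1} on [0,1] is atomless; in particular, mu(phi^{-1}({l})) = 0 for every l in [0,1], and the distribution function l -> mu(phi^{-1}([0,l])) is continuous. -/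
open MeasureTheory

/-- If `(S, Σ, μ)` is an atomless probability space and `phi : S → [0,1]` is a measurable
map generating `Σ` modulo `μ`-null sets, then the pushforward measure `μ ∘ phi⁻¹` is
atomless; in particular every singleton preimage is null and the distribution function
`l ↦ μ(phi⁻¹[0,l])` is continuous. -/
theorem pushforward_atomless_of_generating_map
    {S : Type*} [mS : MeasurableSpace S]
    (mu : Measure S) [IsProbabilityMeasure mu]
    -- `mu` is atomless
    (h_atomless : ∀ D : Set S, MeasurableSet D → 0 < mu D →
      ∃ D₀ ⊆ D, MeasurableSet D₀ ∧ 0 < mu D₀ ∧ mu D₀ < mu D)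
    (phi : S → ℝ) (hphi_meas : Measurable phi)
    (hphi_range : ∀ s, phi s ∈ Set.Icc (0 : ℝ) 1)
    -- `phi` generates `Σ` modulo `mu`-null sets
    (hphi_gen : ∀ A : Set S, MeasurableSet A → ∃ B : Set ℝ, MeasurableSet B ∧
      B ⊆ Set.Icc (0 : ℝ) 1 ∧ mu (symmDiff A (phi ⁻¹' B)) = 0) :
    -- the pushforward `mu.map phi` is atomless ...
    (∀ B : Set ℝ, MeasurableSet B → 0 < mu.map phi B →
      ∃ B' ⊆ B, MeasurableSet B' ∧ 0 < mu.map phi B' ∧ mu.map phi B' < mu.map phi B) ∧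
    -- ... in particular singletons have null preimages ...
    (∀ l : ℝ, mu (phi ⁻¹' {l}) = 0) ∧
    -- ... and the distribution function is continuous
    Continuous (fun l : ℝ => (mu (phi ⁻¹' Set.Icc 0 l)).toReal) := by
  have h1 : ∀ B : Set ℝ, MeasurableSet B → 0 < mu.map phi B →
      ∃ B' ⊆ B, MeasurableSet B' ∧ 0 < mu.map phi B' ∧ mu.map phi B' < mu.map phi B := by
    intro B hB hpos
    rw [Measure.map_apply hphi_meas hB] at hpos
    obtain ⟨D, hDB, hD, hD0, hD1⟩ := h_atomless _ (hphi_meas hB) hpos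
    obtain ⟨C, hC, -, hDC⟩ := hphi_gen D hD
    have hae : D =ᵐ[mu] phi ⁻¹' C := measure_symmDiff_eq_zero_iff.mp hDC
    have key : mu (phi ⁻¹' (B ∩ C)) = mu D := by
      have h2 : (phi ⁻¹' B ∩ D : Set S) =ᵐ[mu] (phi ⁻¹' B ∩ phi ⁻¹' C : Set S) :=
        (Filter.EventuallyEq.refl _ _).inter hae
      rw [Set.preimage_inter, ← measure_congr h2, Set.inter_eq_self_of_subset_right hDB]
    refine ⟨B ∩ C, Set.inter_subset_left, hB.inter hC, ?_, ?_⟩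
    · rw [Measure.map_apply hphi_meas (hB.inter hC), key]
      exact hD0
    · rw [Measure.map_apply hphi_meas (hB.inter hC), key, Measure.map_apply hphi_meas hB]
      exact hD1
  have h2 : ∀ l : ℝ, mu (phi ⁻¹' {l}) = 0 := by
    intro l
    by_contra hne
    rw [← Measure.map_apply hphi_meas (measurableSet_singleton l)] at hne
    obtain ⟨B', hB', -, h0, hlt⟩ := h1 {l} (measurableSet_singleton l) (pos_iff_ne_zero.mpr hne)
    rcases Set.subset_singleton_iff_eq.mp hB' with h | h
    · simp [h] at h0
    · simp [h] at hlt
  refine ⟨h1, h2, ?_⟩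
  rw [continuous_iff_continuousAt]
  intro l
  refine (ENNReal.tendsto_toReal (measure_ne_top mu _)).comp ?_
  refine tendsto_measure_of_ae_tendsto_indicator_of_isFiniteMeasure (nhds l)
    (hphi_meas measurableSet_Icc) (fun i => hphi_meas measurableSet_Icc) ?_
  have hne : ∀ᵐ s ∂mu, phi s ≠ l := by
    rw [ae_iff]
    simp only [ne_eq, not_not]
    exact h2 l
  filter_upwards [hne] with s hs
  rcases lt_or_gt_of_ne hs with h | h
  · filter_upwards [lt_mem_nhds h] with x hx
    simp [hx.le, h.le]
  · filter_upwards [gt_mem_nhds h] with x hx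
    simp [not_le.mpr hx, not_le.mpr h]
end

section
/- Let (S, Sigma, lambda) be a probability space, let ([0,1], B, eta) be the unit interval with its Borel sigma-algebra and Lebesgue measure, and let lambda' = lambda tensor eta be the product probability measure on (S x [0,1], Sigma tensor B). Let G' = { E x [0,1] : E in Sigma }. Then Sigma tensor B has no G'-atom under lambda': for every measurable D contained in S x [0,1] with lambda'(D) > 0 there exists a measurable D_0 contained in D such that for every E in Sigma, lambda'(D_0 symmetric-difference ((E x [0,1]) intersect D)) > 0. -/
open MeasureTheory

/-- **Sunspot extension has no cylinder atoms**: for a probability space `(S, Σ, lam)`,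
the product of `lam` with Lebesgue measure on the unit interval has no atom over the
sub-σ-algebra `G' = {E × [0,1] : E ∈ Σ}` of cylinder sets. -/
theorem no_cylinder_atom_of_prod_lebesgue
    {S : Type*} [mS : MeasurableSpace S]
    (lam : Measure S) [IsProbabilityMeasure lam]
    (lam' : Measure (S × unitInterval))
    (h_lam' : lam' = lam.prod (volume : Measure unitInterval)) :
    ∀ D : Set (S × unitInterval), MeasurableSet D → 0 < lam' D →
      ∃ D₀ ⊆ D, MeasurableSet D₀ ∧ ∀ E : Set S, MeasurableSet E →
        0 < lam' (symmDiff D₀ ((E ×ˢ (Set.univ : Set unitInterval)) ∩ D)) := by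
  subst h_lam'
  intro D hD hpos
  by_contra hcon
  push Not at hcon
  have hq : ∀ q : ℚ, ∃ E : Set S, (lam.prod (volume : Measure unitInterval))
      (symmDiff (D ∩ {p | (p.2 : ℝ) ≤ q}) ((E ×ˢ (Set.univ : Set unitInterval)) ∩ D)) = 0 := by
    intro q
    obtain ⟨E, -, hE⟩ := hcon (D ∩ {p | (p.2 : ℝ) ≤ q}) Set.inter_subset_left
      (hD.inter (measurableSet_le (by fun_prop) measurable_const))
    exact ⟨E, le_antisymm hE (zero_le)⟩
  choose E hE using hq
  have hae : ∀ᵐ p ∂(lam.prod (volume : Measure unitInterval)),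
      ∀ q : ℚ, p ∈ D → ((p.2 : ℝ) ≤ q ↔ p.1 ∈ E q) := by
    rw [ae_all_iff]
    intro q
    filter_upwards [measure_eq_zero_iff_ae_notMem.1 (hE q)] with p hp hpD
    simp only [Set.mem_symmDiff, Set.mem_inter_iff, Set.mem_prod, Set.mem_univ,
      Set.mem_setOf_eq] at hp
    tauto
  have hnull : (lam.prod (volume : Measure unitInterval)) D = 0 := by
    rw [Measure.measure_prod_null hD]
    filter_upwards [Measure.ae_ae_of_ae_prod hae] with s hs
    have hsub : ({y : unitInterval | (s, y) ∈ D ∧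
        ∀ q : ℚ, (s, y) ∈ D → ((y : ℝ) ≤ q ↔ s ∈ E q)}).Subsingleton := by
      have key : ∀ y y' : unitInterval, y < y' → (s, y) ∈ D → (s, y') ∈ D →
          (∀ q : ℚ, (s, y) ∈ D → ((y : ℝ) ≤ q ↔ s ∈ E q)) →
          (∀ q : ℚ, (s, y') ∈ D → ((y' : ℝ) ≤ q ↔ s ∈ E q)) → False := by
        intro y y' hlt h1 h2 h3 h4
        obtain ⟨q, hq1, hq2⟩ := exists_rat_btwn (show (y : ℝ) < y' from hlt)
        exact absurd ((h4 q h2).2 ((h3 q h1).1 hq1.le)) (not_le.2 hq2)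
      rintro y ⟨h1, h3⟩ y' ⟨h2, h4⟩
      rcases lt_trichotomy y y' with h | h | h
      · exact (key y y' h h1 h2 h3 h4).elim
      · exact h
      · exact (key y' y h h2 h1 h4 h3).elim
    have h0 := hsub.measure_zero (volume : Measure unitInterval)
    refine measure_eq_zero_iff_ae_notMem.2 ?_
    filter_upwards [hs, measure_eq_zero_iff_ae_notMem.1 h0] with y hy hy' hyD
    exact hy' ⟨hyD, hy⟩
  exact hpos.ne' hnull
end

section
/- Let eta be Lebesgue measure on [0,1] with Borel sigma-algebra B, and define the transition kernel q : [0,1] x [0,1) -> R by q(s_1 | s) = 1/(1-s) if s_1 is in [s,1] and q(s_1 | s) = 0 if s_1 is in [0,s) (so q(. | s) is the density of the uniform distribution on [s,1]). Suppose that for some positive integer J there are nonnegative jointly measurable functions q_j : [0,1] x [0,1) -> R and nonnegative eta-integrable functions rho_j : [0,1] -> R, j = 1,...,J, with q(s_1 | s) = sum over j = 1,...,J of q_j(s_1, s) * rho_j(s_1) for all s in [0,1) and s_1 in [0,1]. Let G be the strong completion (with respect to eta-null sets in B) of the smallest sigma-algebra on [0,1] making every function q_j(., s), for 1 <= j <=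 J and s in [0,1), measurable. Then B has a G-atom under eta: there exists D in B with eta(D) > 0 such that for every B-measurable D_0 contained in D there exists D_1 in G with eta(D_0 symmetric-difference (D_1 intersect D)) = 0. Consequently, the atomless part of the transition probability in Levy's counterexample does not have a decomposable coarser transition kernel. -/
open MeasureTheory

theorem measurableSet_Ioi_real : MeasurableSet (Set.Ioi (0 : ℝ)) := measurableSet_Ioi

theorem exists_good_set (eta : Measure ℝ) (h_eta : eta = volume.restrict (Set.Icc 0 1))
    (J : ℕ) (rho : Fin J → ℝ → ℝ) (hrho_int : ∀ j, Integrable (rho j) eta) :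
    ∃ (S : Set (Fin J)) (D : Set ℝ), MeasurableSet D ∧ 0 < eta D ∧
      D ⊆ Set.Ico 0 1 ∩ ⋂ j, {x | 0 < rho j x ↔ j ∈ S} := by
  classical
  let A : Set (Fin J) → Set ℝ := fun S =>
    Set.Ico 0 1 ∩ ⋂ j, {x | 0 < rho j x ↔ j ∈ S}
  have hA_null : ∀ S, NullMeasurableSet (A S) eta := by
    intro S
    refine measurableSet_Ico.nullMeasurableSet.inter (NullMeasurableSet.iInter fun j => ?_)
    have h1 : NullMeasurableSet {x | 0 < rho j x} eta :=
      (hrho_int j).aemeasurable.nullMeasurable measurableSet_Ioi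
    by_cases hj : j ∈ S
    · simpa [hj] using h1
    · have h2 := h1.compl
      have h3 : {x | 0 < rho j x ↔ j ∈ S} = {x | 0 < rho j x}ᶜ := by
        ext x; simp [hj]
      rw [h3]; exact h2
  have hpos : ∃ S, 0 < eta (A S) := by
    by_contra hcon
    push Not at hcon
    have h0 : eta (⋃ S, A S) = 0 := by
      rw [measure_iUnion_null_iff]
      intro S
      exact le_antisymm (hcon S) zero_le
    have hsub : Set.Ico (0 : ℝ) 1 ⊆ ⋃ S, A S := by
      intro x hx
      refine Set.mem_iUnion.2 ⟨{j | 0 < rho j x}, hx, ?_⟩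
      simp
    have h1 : eta (Set.Ico (0 : ℝ) 1) = 0 := measure_mono_null hsub h0
    rw [h_eta, Measure.restrict_apply measurableSet_Ico,
      Set.inter_eq_left.2 Set.Ico_subset_Icc_self, Real.volume_Ico] at h1
    norm_num at h1
  obtain ⟨S, hS⟩ := hpos
  obtain ⟨D, hDA, hDm, hDae⟩ := (hA_null S).exists_measurable_subset_ae_eq
  exact ⟨S, D, hDm, by rwa [measure_congr hDae], hDA⟩

/-- **Levy's counterexample fails the decomposable coarser kernel condition**: if the
uniform kernel `q(s₁|s) = (1-s)⁻¹ · 1_{[s,1]}(s₁)` on the Lebesgue unit interval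
decomposes as `q(s₁|s) = ∑ⱼ qⱼ(s₁,s) ρⱼ(s₁)` with `qⱼ` nonnegative jointly measurable and
`ρⱼ` nonnegative integrable, and `G` is the strong completion of the σ-algebra generated
by the functions `qⱼ(·,s)`, then the Borel σ-algebra has a `G`-atom. -/
theorem levy_uniform_kernel_has_gAtom
    -- Lebesgue measure on the unit interval
    (eta : Measure ℝ) (h_eta : eta = volume.restrict (Set.Icc 0 1))
    -- the uniform transition kernel of Levy's example
    (q : ℝ → ℝ → ℝ)
    (hq : ∀ s ∈ Set.Ico (0 : ℝ) 1, ∀ s₁ : ℝ,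
      q s₁ s = if s₁ ∈ Set.Icc s 1 then 1 / (1 - s) else 0)
    -- a decomposition `q(s₁|s) = ∑ⱼ qⱼ(s₁,s) ρⱼ(s₁)`
    (J : ℕ) (hJ : 0 < J)
    (qj : Fin J → ℝ → ℝ → ℝ) (rho : Fin J → ℝ → ℝ)
    (hqj_nonneg : ∀ j s₁ s, 0 ≤ qj j s₁ s)
    (hqj_meas : ∀ j, Measurable fun p : ℝ × ℝ => qj j p.1 p.2)
    (hrho_nonneg : ∀ j s₁, 0 ≤ rho j s₁)
    (hrho_int : ∀ j, Integrable (rho j) eta)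
    (h_decomp : ∀ s ∈ Set.Ico (0 : ℝ) 1, ∀ s₁ ∈ Set.Icc (0 : ℝ) 1,
      q s₁ s = ∑ j, qj j s₁ s * rho j s₁)
    -- `G₀` is the smallest σ-algebra making every `qⱼ(·,s)` measurable
    (G₀ : MeasurableSpace ℝ)
    (hG₀ : G₀ = ⨆ (j : Fin J), ⨆ (s : ℝ), ⨆ (_ : s ∈ Set.Ico (0 : ℝ) 1),
      MeasurableSpace.comap (fun s₁ => qj j s₁ s) Real.measurableSpace) :
    -- then the Borel σ-algebra has an atom over the strong completion `G` of `G₀`: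
    -- sets of `G` have the form `E ∆ E₀` with `E ∈ G₀` and `E₀` an `eta`-null Borel set
    ∃ D : Set ℝ, MeasurableSet[Real.measurableSpace] D ∧ 0 < eta D ∧
      ∀ D₀ ⊆ D, MeasurableSet[Real.measurableSpace] D₀ →
        ∃ D₁ E E₀ : Set ℝ, MeasurableSet[G₀] E ∧
          MeasurableSet[Real.measurableSpace] E₀ ∧ eta E₀ = 0 ∧
          D₁ = symmDiff E E₀ ∧ eta (symmDiff D₀ (D₁ ∩ D)) = 0 := by
  obtain ⟨S, D, hDm, hDpos, hDA⟩ := exists_good_set eta h_eta J rho hrho_int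
  have key : ∀ B : Set ℝ, MeasurableSet[Real.measurableSpace] B → ∃ E, MeasurableSet[G₀] E ∧ E ∩ D = B ∩ D := by
    intro B hB
    have hB' : MeasurableSet[MeasurableSpace.generateFrom (Set.range (Set.Ici : ℝ → Set ℝ))] B := by
      rw [← borel_eq_generateFrom_Ici, ← Real.borelSpace.measurable_eq]; exact hB
    clear hB
    induction B, hB' using MeasurableSpace.generateFrom_induction with
    | hC t ht _ =>
      obtain ⟨s, rfl⟩ := ht
      rcases lt_or_ge s 0 with hs0 | hs0
      · refine ⟨Set.univ, @MeasurableSet.univ _ G₀, ?_⟩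
        ext x
        simp only [Set.mem_inter_iff, Set.mem_univ, true_and, Set.mem_Ici]
        exact ⟨fun h => ⟨hs0.le.trans (hDA h).1.1, h⟩, fun h => h.2⟩
      rcases le_or_gt 1 s with hs1 | hs1
      · refine ⟨∅, @MeasurableSet.empty _ G₀, ?_⟩
        ext x
        simp only [Set.mem_inter_iff, Set.mem_empty_iff_false, false_and, Set.mem_Ici, false_iff]
        rintro ⟨h1, h2⟩
        have := (hDA h2).1.2
        linarith
      have hs : s ∈ Set.Ico (0 : ℝ) 1 := ⟨hs0, hs1⟩
      refine ⟨⋃ j, ⋃ (_ : j ∈ S), {x | 0 < qj j x s}, ?_, ?_⟩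
      · refine MeasurableSet.iUnion fun j => MeasurableSet.iUnion fun _ => ?_
        have hle : MeasurableSpace.comap (fun s₁ => qj j s₁ s) Real.measurableSpace ≤ G₀ := by
          rw [hG₀]
          exact le_iSup_of_le j (le_iSup_of_le s (le_iSup_of_le hs le_rfl))
        exact hle _ ⟨Set.Ioi 0, measurableSet_Ioi_real, rfl⟩
      · ext x
        simp only [Set.mem_inter_iff, Set.mem_iUnion, Set.mem_setOf_eq, Set.mem_Ici, exists_prop]
        refine and_congr_left fun hx => ?_
        have hxA := hDA hx
        have hx01 := hxA.1
        have hxS : ∀ j, 0 < rho j x ↔ j ∈ S := fun j => Set.mem_iInter.1 hxA.2 j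
        have hd := h_decomp s hs x ⟨hx01.1, hx01.2.le⟩
        rw [hq s hs x] at hd
        have hnn : ∀ j ∈ Finset.univ, 0 ≤ qj j x s * rho j x := fun j _ =>
          mul_nonneg (hqj_nonneg _ _ _) (hrho_nonneg _ _)
        constructor
        · rintro ⟨j, hj, hqpos⟩
          by_contra hlt
          rw [if_neg (fun h => hlt h.1)] at hd
          have := (Finset.sum_eq_zero_iff_of_nonneg hnn).1 hd.symm j (Finset.mem_univ j)
          have h2 := mul_pos hqpos ((hxS j).2 hj)
          linarith
        · intro hsx
          rw [if_pos ⟨hsx, hx01.2.le⟩] at hd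
          by_contra hcon
          push Not at hcon
          have hz : ∑ j, qj j x s * rho j x = 0 := by
            refine Finset.sum_eq_zero fun j _ => ?_
            by_cases hj : j ∈ S
            · rw [le_antisymm (hcon j hj) (hqj_nonneg _ _ _), zero_mul]
            · have : rho j x = 0 :=
                le_antisymm (not_lt.1 fun h => hj ((hxS j).1 h)) (hrho_nonneg _ _)
              rw [this, mul_zero]
          have : 0 < 1 / (1 - s) := by
            apply one_div_pos.2; linarith
          linarith
    | empty => exact ⟨∅, @MeasurableSet.empty _ G₀, rfl⟩
    | compl t _ ih =>
      obtain ⟨E, hE, h⟩ := ih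
      refine ⟨Eᶜ, hE.compl, ?_⟩
      ext x
      have := Set.ext_iff.1 h x
      simp only [Set.mem_inter_iff, Set.mem_compl_iff] at this ⊢
      tauto
    | iUnion f _ ih =>
      choose E hE h using ih
      refine ⟨⋃ n, E n, MeasurableSet.iUnion hE, ?_⟩
      rw [Set.iUnion_inter, Set.iUnion_inter]
      exact Set.iUnion_congr h
  refine ⟨D, hDm, hDpos, fun D₀ hD₀ hD₀m => ?_⟩
  obtain ⟨E, hE, h⟩ := key D₀ hD₀m
  refine ⟨E, E, ∅, hE, @MeasurableSet.empty _ Real.measurableSpace, measure_empty, ?_, ?_⟩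
  · exact (symmDiff_bot E).symm
  · rw [h, Set.inter_eq_left.2 hD₀, symmDiff_self]
    exact measure_empty
end
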